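/- There is no (r)-pancyclic graph with r ≥ 3 on v vertices having at most v + 5 edges. That is, for every r ≥ 3, every finite simple graph G on v vertices whose edge count is at most v + 5 fails to contain precisely r cycles of every length from 3 to v. -/

import Mathlib

open SimpleGraph

/-- The number of cycles of length `k` in `G`, counted as subgraphs of `G`
isomorphic to the cycle graph `C_k`. -/
noncomputable def cycleCount {V : Type*} (G : SimpleGraph V) (k : ℕ) : ℕ :=
  {H : G.Subgraph | Nonempty (H.coe ≃g cycleGraph k)}.ncard

/-- A graph on `v ≥ 3` vertices is `(r)`-pancyclic if it contains precisely `r`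
cycles of every length from `3` to `v`. -/
def IsRPancyclic {V : Type*} [Fintype V] (G : SimpleGraph V) (r : ℕ) : Prop :=
  3 ≤ Fintype.card V ∧
    ∀ k : ℕ, 3 ≤ k → k ≤ Fintype.card V → cycleCount G k = r

set_option linter.all false

namespace RPan

@[reducible] def force {α : Type} (n : Nat) (k : Nat → α) : α := Nat.rec (k 0) (fun m _ => k (Nat.succ m)) n
@[reducible] def forceS {α : Type} (n : Nat) (k : Nat → α) : α := force (Nat.add (Nat.mul n 18446744073709551616) (Nat.mod n 2305843009213693951)) fun z => k (Nat.div z 18446744073709551616)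
@[reducible] def ite' {α : Type} (b : Bool) (t e : α) : α := Bool.rec e t b

def insAll (x : Nat) : List Nat → List (List Nat)
  | [] => [[x]]
  | y :: t => (x :: y :: t) :: (insAll x t).map (fun l => y :: l)

def words : Nat → List (List Nat)
  | 0 => [[]]
  | c+1 => (words c).flatMap fun w => (insAll c w).map fun l => c :: l

def pk (W : Nat) (g : Nat → Nat) (n : Nat) : Nat := Nat.rec 0 (fun n ih => Nat.add ih (Nat.mul (g n) (Nat.pow W n))) n

/-- monotone check -/
def chk (K HI W1 nd hs Z : Nat) : Bool :=
  Nat.beq (Nat.land (Nat.add (Nat.mod (Nat.div (Nat.land (Nat.sub K Z) HI) 32768) W1) nd) hs) hs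

def inc (ck : Nat → Bool) (D : Nat) (next : Nat → Nat → Nat → Bool) (rem : Nat) :
    Nat → Nat → Nat → Bool :=
  Nat.rec (fun _ e Z => next Z 0 e)
   (fun rem ih cap e Z => ite' (next Z (Nat.succ rem) e) 
     (Nat.rec true (fun cap' _ => forceS (Nat.add Z D) fun Z' =>
        ite' (ck Z') (ih cap' (Nat.succ e) Z') true) cap) false) rem

def go (ck : Nat → Bool) (cap : Nat) (Ds : List Nat) : Nat → Nat → Nat → Bool :=
  List.rec (fun _ _ rem => Nat.rec false (fun _ _ => true) rem)
  (fun D _ ih k Z rem => 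
    ite' (Nat.ble rem (Nat.mul cap k)) (force (Nat.pred k) fun k' => inc ck D (fun Z rem _ => ih k' Z rem) rem cap 0 Z)
    true) Ds

def runR (K HI W1 hs WN J Dw : Nat) (Ds : List Nat) (Z k N : Nat) (d : Nat) : Bool :=
  Nat.rec true (fun d' ih => force (Nat.succ d') fun d => 
    ite' (Nat.ble k (Nat.add d 2)) 
    (ite' (Nat.beq (Nat.mod N d) 0) 
      (forceS (Nat.mod (Nat.mul (Nat.div N d) WN) (Nat.pow 65536 d)) fun nd0 =>
       forceS (Nat.sub hs (Nat.add nd0 (Nat.mul nd0 (Nat.pow 65536 J)))) fun nd =>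
       ite' (chk K HI W1 nd hs Z) 
        (force (Nat.sub (Nat.add d 2) k) fun rem => force (Nat.pred k) fun k' =>
         ite' (inc (chk K HI W1 nd hs) Dw (fun Z rem e => go (chk K HI W1 nd hs) e Ds k' Z rem) rem rem 0 Z) ih false) ih)
      ih) true) d

def expd (ONs DG M : Nat) : Nat := Nat.land (Nat.mul M ONs) DG
def mkD (OB BA eM : Nat) : Nat := Nat.sub OB (Nat.mul eM BA)
def upd (on ONd Bad M eM : Nat) : Nat := 
  forceS (Nat.mul eM on) fun r => Nat.lor Bad (Nat.sub r (Nat.land r (Nat.mul M ONd)))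

/-- S = sum of arcs, T0 = sizes -/
def runType (K HI W1 hs WN J ONs DG on hi A B n2 Dw Bad TS k : Nat) (Ds : List Nat) : Bool :=
  forceS (Nat.pred (Nat.div (Nat.land (Nat.add (Nat.mod Bad W1) (Nat.mul (Nat.sub 32768 n2) on)) hi) 32768)) fun al =>
  force (Nat.mod al 65535) fun N =>
  forceS (Nat.add (Nat.mul 1024 (Nat.sub on al)) (Nat.mul 5 on)) fun dead =>
  forceS (Nat.add (Nat.mul (expd ONs DG (Nat.add dead TS)) A)
    (Nat.mul (expd ONs DG (Nat.sub (Nat.add dead (Nat.mul (Nat.add 3 k) on)) TS)) B)) fun Z =>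
  runR K HI W1 hs WN J Dw Ds Z k N (Nat.div N 3)

def lexok (a b : Nat) : List Nat → Bool
  | [] => true
  | x :: t => ite' (Nat.beq x a) true (ite' (Nat.beq x b)  (!(t.any (Nat.beq a))) (lexok a b t))

def zdfs (K HI W1 hs WN J ONs DG on hi A B n2 ONd OB BA Dw : Nat) (C : Nat → Nat) (t : List Nat) :
    Nat → (M : Nat) → (Bad TS k : Nat) → List Nat → Bool := 
  List.rec (fun _ _ Bad TS k Ds => runType K HI W1 hs WN J ONs DG on hi A B n2 Dw Bad TS k Ds)
  (fun b t ih a M Bad TS k Ds => 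
    forceS (Nat.xor M (C b)) fun M' =>
    ite' (forceS (expd ONs DG M) fun eM => 
      forceS (mkD OB BA eM) fun D =>
      forceS (upd on ONd Bad M eM) fun Bad' =>
      forceS (Nat.add TS M) fun TS' =>
      force (Nat.succ k) fun k' =>
      ih b M' Bad' TS' k' (D :: Ds)) (ite' (Nat.ble a b) true (ite' (lexok a b t) (ih b M' Bad TS k Ds) true)) false) t

def sel (C0 C1 C2 C3 C4 l : Nat) : Nat := Nat.rec C0 (fun l _ => Nat.rec C1 (fun l _ => Nat.rec C2 (fun l _ => Nat.rec C3 (fun l _ => C4) l) l) l) l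

def bitf (l n : Nat) : Nat := Nat.mod (Nat.div n (Nat.pow 2 l)) 2

def runWords (c : Nat) (ws : List (List Nat)) : Bool :=
  force (Nat.pow 2 (Nat.succ c)) fun nc => 
  force (Nat.pow 2 c) fun J =>
  force (Nat.pow 65536 nc) fun S =>
  force (Nat.pow 65536 (Nat.succ nc)) fun W =>
  force (Nat.pred W) fun W1 =>
  force (pk 65536 (fun _ => 1) nc) fun on =>
  force (Nat.mul 32768 on) fun hi =>
  force (pk S (fun _ => 1) nc) fun ONs =>
  force (pk S (fun i => Nat.mul 65535 (Nat.pow 65536 i)) nc) fun DG =>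
  force (pk W (fun _ => 1) nc) fun ONd =>
  force (pk 65536 (fun _ => 1) J) fun A =>
  force (Nat.mul A (Nat.pow 65536 J)) fun B =>
  force (Nat.sub B A) fun BA =>
  force (Nat.mul ONd B) fun OB =>
  force (pk 65536 (fun j => Nat.add 32776 j) J) fun K0 =>
  force (Nat.mul ONd (Nat.add K0 (Nat.mul K0 (Nat.pow 65536 J)))) fun K =>
  force (Nat.mul 32768 (Nat.add A B)) fun hs =>
  force (Nat.mul ONd hs) fun HI =>
  force (pk 65536 Nat.succ J) fun WN =>
  force (pk 65536 (bitf 0) nc) fun M0 =>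
  force (pk 65536 (bitf 1) nc) fun C0 =>
  force (pk 65536 (bitf 2) nc) fun C1 =>
  force (pk 65536 (bitf 3) nc) fun C2 =>
  force (pk 65536 (bitf 4) nc) fun C3 =>
  force (pk 65536 (bitf 5) nc) fun C4 =>
  force (Nat.add C0 (Nat.add C1 (Nat.add C2 (Nat.add C3 (Nat.add C4 M0))))) fun TS0 =>
  force (expd ONs DG M0) fun e =>
  force (mkD OB BA e) fun Dw =>
  force (upd on ONd 0 M0 e) fun b =>
  force (upd on ONd b C0 (expd ONs DG C0)) fun b =>
  force (upd on ONd b C1 (expd ONs DG C1)) fun b =>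
  force (upd on ONd b C2 (expd ONs DG C2)) fun b =>
  force (upd on ONd b C3 (expd ONs DG C3)) fun b =>
  force (upd on ONd b C4 (expd ONs DG C4)) fun Bad0 =>
  force (Nat.sub nc 2) fun n2 =>
  List.rec true (fun w _ ih => ite' 
  (List.rec true (fun a t _ => forceS (Nat.xor M0 (sel C0 C1 C2 C3 C4 a)) fun M => 
    zdfs K HI W1 hs WN J ONs DG on hi A B n2 ONd OB BA Dw (sel C0 C1 C2 C3 C4) t a M Bad0 TS0 1 []) w) ih false) ws

def runSlice (c s n : Nat) : Bool := runWords c ((words c).drop s |>.take n)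
end RPan

namespace RPan
open Finset

theorem force_eq {α : Type} (n : Nat) (k : Nat → α) : force n k = k n := by cases n <;> rfl
theorem forceS_eq {α : Type} (n : Nat) (k : Nat → α) : forceS n k = k n := by
  unfold forceS
  rw [force_eq]
  congr 1
  show (n * 18446744073709551616 + n % 2305843009213693951) / 18446744073709551616 = n
  have : n % 2305843009213693951 < 2305843009213693951 := Nat.mod_lt _ (by norm_num)
  omega
theorem ite'_true {α : Type} (t e : α) : ite' true t e = t := rfl
theorem ite'_false {α : Type} (t e : α) : ite' false t e = e := rfl

theorem pk_zero (W : ℕ) (g : ℕ → ℕ) : pk W g 0 = 0 := rfl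
theorem pk_succ (W : ℕ) (g : ℕ → ℕ) (n : ℕ) : pk W g (n+1) = pk W g n + g n * W ^ n := rfl
theorem pk_eq_sum (W : ℕ) (g : ℕ → ℕ) (n : ℕ) : pk W g n = ∑ i ∈ range n, g i * W ^ i := by
  induction n with
  | zero => rfl
  | succ n ih => rw [pk_succ, ih, sum_range_succ]

theorem pk_congr {W : ℕ} {f g : ℕ → ℕ} {n : ℕ} (h : ∀ i < n, f i = g i) : pk W f n = pk W g n := by
  rw [pk_eq_sum, pk_eq_sum]
  exact sum_congr rfl fun i hi => by rw [h i (mem_range.1 hi)]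

theorem pk_add (W : ℕ) (f g : ℕ → ℕ) (n : ℕ) : pk W f n + pk W g n = pk W (fun i => f i + g i) n := by
  simp only [pk_eq_sum, ← sum_add_distrib, add_mul]

theorem pk_mul (W c : ℕ) (f : ℕ → ℕ) (n : ℕ) : c * pk W f n = pk W (fun i => c * f i) n := by
  simp only [pk_eq_sum, mul_sum, mul_assoc]

theorem pk_mul' (W c : ℕ) (f : ℕ → ℕ) (n : ℕ) : pk W f n * c = pk W (fun i => f i * c) n := by
  rw [mul_comm, pk_mul]; exact pk_congr fun i _ => mul_comm _ _

theorem pk_sub (W : ℕ) (f g : ℕ → ℕ) (n : ℕ) (h : ∀ i < n, g i ≤ f i) :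
    pk W f n - pk W g n = pk W (fun i => f i - g i) n := by
  apply Nat.sub_eq_of_eq_add
  rw [pk_add]
  exact pk_congr fun i hi => by have := h i hi; omega

theorem pk_lt {W : ℕ} {g : ℕ → ℕ} {n : ℕ} (h : ∀ i < n, g i < W) : pk W g n < W ^ n := by
  induction n with
  | zero => simp [pk_zero]
  | succ n ih =>
    rw [pk_succ]
    have h1 := ih fun i hi => h i (by omega)
    have h2 := h n (by omega)
    calc pk W g n + g n * W ^ n < W ^ n + g n * W ^ n := by omega
      _ = (g n + 1) * W ^ n := by ring
      _ ≤ W * W ^ n := Nat.mul_le_mul_right _ h2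
      _ = W ^ (n+1) := by ring

theorem pk_append (W : ℕ) (f : ℕ → ℕ) (a b : ℕ) :
    pk W f (a + b) = pk W f a + W ^ a * pk W (fun j => f (a + j)) b := by
  simp only [pk_eq_sum, sum_range_add, mul_sum]
  congr 1
  exact sum_congr rfl fun i _ => by ring

theorem split_land {k a a' b b' : ℕ} (h : a < 2 ^ k) (h' : a' < 2 ^ k) :
    (a + b * 2 ^ k) &&& (a' + b' * 2 ^ k) = (a &&& a') + (b &&& b') * 2 ^ k := by
  have h2 : (a &&& a') < 2 ^ k := Nat.and_lt_two_pow _ h'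
  rw [add_comm a, add_comm a', add_comm (a &&& a'), mul_comm b, mul_comm b', mul_comm (b &&& b')]
  apply Nat.eq_of_testBit_eq; intro i
  rw [Nat.testBit_and, Nat.testBit_two_pow_mul_add _ h, Nat.testBit_two_pow_mul_add _ h',
    Nat.testBit_two_pow_mul_add _ h2]
  split <;> simp

theorem split_lor {k a a' b b' : ℕ} (h : a < 2 ^ k) (h' : a' < 2 ^ k) :
    (a + b * 2 ^ k) ||| (a' + b' * 2 ^ k) = (a ||| a') + (b ||| b') * 2 ^ k := by
  have h2 : (a ||| a') < 2 ^ k := Nat.or_lt_two_pow h h'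
  rw [add_comm a, add_comm a', add_comm (a ||| a'), mul_comm b, mul_comm b', mul_comm (b ||| b')]
  apply Nat.eq_of_testBit_eq; intro i
  rw [Nat.testBit_or, Nat.testBit_two_pow_mul_add _ h, Nat.testBit_two_pow_mul_add _ h',
    Nat.testBit_two_pow_mul_add _ h2]
  split <;> simp

theorem split_xor {k a a' b b' : ℕ} (h : a < 2 ^ k) (h' : a' < 2 ^ k) :
    (a + b * 2 ^ k) ^^^ (a' + b' * 2 ^ k) = (a ^^^ a') + (b ^^^ b') * 2 ^ k := by
  have h2 : (a ^^^ a') < 2 ^ k := Nat.xor_lt_two_pow h h'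
  rw [add_comm a, add_comm a', add_comm (a ^^^ a'), mul_comm b, mul_comm b', mul_comm (b ^^^ b')]
  apply Nat.eq_of_testBit_eq; intro i
  rw [Nat.testBit_xor, Nat.testBit_two_pow_mul_add _ h, Nat.testBit_two_pow_mul_add _ h',
    Nat.testBit_two_pow_mul_add _ h2]
  split <;> simp

theorem pk_land {w : ℕ} {f g : ℕ → ℕ} {n : ℕ} (hf : ∀ i < n, f i < 2 ^ w) (hg : ∀ i < n, g i < 2 ^ w) :
    pk (2 ^ w) f n &&& pk (2 ^ w) g n = pk (2 ^ w) (fun i => f i &&& g i) n := by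
  induction n with
  | zero => simp [pk_zero]
  | succ n ih =>
    have h1 := pk_lt (W := 2 ^ w) fun i (hi : i < n) => hf i (by omega)
    have h2 := pk_lt (W := 2 ^ w) fun i (hi : i < n) => hg i (by omega)
    simp only [pk_succ]
    rw [← ih (fun i hi => hf i (by omega)) (fun i hi => hg i (by omega))]
    rw [← pow_mul] at h1 h2 ⊢
    exact split_land h1 h2

theorem pk_lor {w : ℕ} {f g : ℕ → ℕ} {n : ℕ} (hf : ∀ i < n, f i < 2 ^ w) (hg : ∀ i < n, g i < 2 ^ w) :
    pk (2 ^ w) f n ||| pk (2 ^ w) g n = pk (2 ^ w) (fun i => f i ||| g i) n := by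
  induction n with
  | zero => simp [pk_zero]
  | succ n ih =>
    have h1 := pk_lt (W := 2 ^ w) fun i (hi : i < n) => hf i (by omega)
    have h2 := pk_lt (W := 2 ^ w) fun i (hi : i < n) => hg i (by omega)
    simp only [pk_succ]
    rw [← ih (fun i hi => hf i (by omega)) (fun i hi => hg i (by omega))]
    rw [← pow_mul] at h1 h2 ⊢
    exact split_lor h1 h2

theorem pk_xor {w : ℕ} {f g : ℕ → ℕ} {n : ℕ} (hf : ∀ i < n, f i < 2 ^ w) (hg : ∀ i < n, g i < 2 ^ w) :
    pk (2 ^ w) f n ^^^ pk (2 ^ w) g n = pk (2 ^ w) (fun i => f i ^^^ g i) n := by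
  induction n with
  | zero => simp [pk_zero]
  | succ n ih =>
    have h1 := pk_lt (W := 2 ^ w) fun i (hi : i < n) => hf i (by omega)
    have h2 := pk_lt (W := 2 ^ w) fun i (hi : i < n) => hg i (by omega)
    simp only [pk_succ]
    rw [← ih (fun i hi => hf i (by omega)) (fun i hi => hg i (by omega))]
    rw [← pow_mul] at h1 h2 ⊢
    exact split_xor h1 h2

theorem pk_mod {W : ℕ} {g : ℕ → ℕ} {n : ℕ} (h : ∑ i ∈ range n, g i < W - 1) :
    pk W g n % (W - 1) = ∑ i ∈ range n, g i := by
  have : pk W g n ≡ ∑ i ∈ range n, g i [MOD (W - 1)] := by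
    rw [pk_eq_sum]
    apply Nat.ModEq.sum
    intro i _
    have h1 : W ≡ 1 [MOD (W-1)] := by
      have : W = 1 + (W - 1) := by omega
      conv_lhs => rw [this]
      simp [Nat.ModEq]
    simpa using (Nat.ModEq.refl (g i)).mul (h1.pow i)
  rw [this, Nat.mod_eq_of_lt h]

theorem land_32768 {d : ℕ} (h : d < 65536) : d &&& 32768 = if 32768 ≤ d then 32768 else 0 := by
  have h0 : d &&& 2 ^ 15 = (d.testBit 15).toNat * 2 ^ 15 := Nat.and_two_pow d 15
  rw [Nat.testBit_eq_decide_div_mod_eq] at h0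
  norm_num at h0
  rw [h0]
  split
  · have : d / 32768 % 2 = 1 := by omega
    simp [this]
  · have : d / 32768 % 2 = 0 := by omega
    simp [this]

theorem land_65535 {d : ℕ} (h : d < 65536) : d &&& 65535 = d := by
  have := Nat.and_two_pow_sub_one_eq_mod d 16
  norm_num at this
  rw [this]; omega

theorem P16 : 65536 = 2 ^ 16 := by norm_num

theorem single_land {m : ℕ → ℕ} {n i : ℕ} (hm : ∀ i < n, m i < 65536) (hi : i < n) :
    pk 65536 m n &&& (65535 * 65536 ^ i) = m i * 65536 ^ i := by
  have h1 : 65535 * 65536 ^ i = pk 65536 (fun j => if j = i then 65535 else 0) n := by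
    rw [pk_eq_sum]; simp [hi, ite_mul]
  rw [h1, P16, pk_land (by rw [← P16]; exact hm) (by intro j hj; dsimp; split <;> norm_num), pk_eq_sum, sum_eq_single i]
  · simp only [if_true]; rw [land_65535 (hm i hi)]
  · intro j _ hj; simp [hj]
  · intro h; simp at h; omega

theorem expd_eq {m : ℕ → ℕ} {n : ℕ} (hm : ∀ i < n, m i < 65536) :
    expd (pk (65536 ^ n) (fun _ => 1) n) (pk (65536 ^ n) (fun i => 65535 * 65536 ^ i) n) (pk 65536 m n) =
      pk (65536 ^ (n + 1)) m n := by
  show (pk 65536 m n * pk (65536 ^ n) (fun _ => 1) n) &&& _ = _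
  have hlt := pk_lt hm
  have hS : (65536:ℕ) ^ n = 2 ^ (16 * n) := by rw [pow_mul]; norm_num
  rw [pk_mul, hS, pk_land, pk_eq_sum (2 ^ (16 * n)), pk_eq_sum (65536 ^ (n + 1))]
  · apply sum_congr rfl
    intro i hi
    rw [mul_one, single_land hm (mem_range.1 hi), ← hS]
    ring
  · intro i hi; rw [mul_one, ← hS]; exact hlt
  · intro i hi; rw [← hS]
    calc 65535 * 65536 ^ i < 65536 * 65536 ^ i := by
          apply Nat.mul_lt_mul_of_pos_right; norm_num; positivity
      _ = 65536 ^ (i+1) := by ring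
      _ ≤ _ := Nat.pow_le_pow_right (by norm_num) hi
end RPan

namespace RPan
open Finset

theorem inc_sound (ck : ℕ → Bool) (D : ℕ) (next : ℕ → ℕ → ℕ → Bool) :
    ∀ rem cap e Z, inc ck D next rem cap e Z = true → ∀ x, x ≤ cap → x ≤ rem →
      (∀ y, 1 ≤ y → y ≤ x → ck (Z + y * D) = true) → next (Z + x * D) (rem - x) (e + x) = true := by
  intro rem
  induction rem with
  | zero =>
    intro cap e Z h x hx1 hx2 _
    have : x = 0 := by omega
    subst this
    have h' : next Z 0 e = true := h
    simpa using h'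
  | succ rem ih =>
    intro cap e Z h x hx1 hx2 hck
    have h' : ite' (next Z (Nat.succ rem) e)
     (Nat.rec true (fun cap' _ => forceS (Nat.add Z D) fun Z' =>
        ite' (ck Z') (inc ck D next rem cap' (Nat.succ e) Z') true) cap) false = true := h
    cases hn : next Z (Nat.succ rem) e with
    | false => rw [hn, ite'_false] at h'; cases h'
    | true =>
      rw [hn, ite'_true] at h'
      cases x with
      | zero => simpa using hn
      | succ x =>
        cases cap with
        | zero => omega
        | succ cap =>
          have h2 : (forceS (Nat.add Z D) fun Z' =>
            ite' (ck Z') (inc ck D next rem cap (Nat.succ e) Z') true) = true := h'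
          rw [forceS_eq] at h2
          have h3 : ck (Nat.add Z D) = true := by
            have := hck 1 (by omega) (by omega)
            rwa [one_mul] at this
          rw [h3, ite'_true] at h2
          have h4 := ih cap (e+1) (Z + D) h2 x (by omega) (by omega) (by
            intro y hy1 hy2
            have := hck (y+1) (by omega) (by omega)
            rwa [show Z + (y+1) * D = Z + D + y * D by ring] at this)
          rwa [show Z + D + x * D = Z + (x+1) * D by ring, show e + 1 + x = e + (x + 1) by ring,
            show rem - x = rem + 1 - (x + 1) by omega] at h4

def dN : List ℕ → List ℕ → ℕ
  | y :: ys, D :: Ds => y * D + dN ys Ds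
  | _, _ => 0

def zer (xs : List ℕ) : List ℕ := xs.map fun _ => 0

theorem zer_le (xs : List ℕ) : List.Forall₂ (· ≤ ·) (zer xs) xs := by
  induction xs with
  | nil => exact List.Forall₂.nil
  | cons x xs ih => exact List.Forall₂.cons (Nat.zero_le _) ih

theorem dN_zer : ∀ (xs Ds : List ℕ), dN (zer xs) Ds = 0
  | [], Ds => rfl
  | x :: xs, [] => rfl
  | x :: xs, D :: Ds => by
    show 0 * D + dN (zer xs) Ds = 0
    rw [dN_zer xs Ds]; simp

theorem go_sound (ck : ℕ → Bool) (cap : ℕ) : ∀ (Ds : List ℕ) (k Z rem : ℕ), go ck cap Ds k Z rem = true →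
    ∀ xs : List ℕ, xs.length = Ds.length → (∀ x ∈ xs, x ≤ cap) → xs.sum = rem → Ds.length ≤ k →
    (∀ ys, List.Forall₂ (· ≤ ·) ys xs → ck (Z + dN ys Ds) = true) → False := by
  intro Ds
  induction Ds with
  | nil =>
    intro k Z rem h xs hl hx hs hk hck
    have : xs = [] := List.length_eq_zero_iff.1 hl
    subst this
    simp at hs
    subst hs
    cases h
  | cons D Ds ih =>
    intro k Z rem h xs hl hx hs hk hck
    cases xs with
    | nil => simp at hl
    | cons x xs =>
      simp only [List.length_cons] at hl hk
      have hle : rem ≤ cap * k := by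
        rw [← hs]
        have h1 := List.sum_le_card_nsmul (x :: xs) cap hx
        have h2 : (x :: xs).length ≤ k := by simp; omega
        calc _ ≤ _ := h1
          _ = (x :: xs).length * cap := by simp
          _ ≤ k * cap := Nat.mul_le_mul_right _ h2
          _ = _ := mul_comm _ _
      have h' : ite' (Nat.ble rem (Nat.mul cap k)) (force (Nat.pred k) fun k' =>
        inc ck D (fun Z rem _ => go ck cap Ds k' Z rem) rem cap 0 Z) true = true := h
      rw [show Nat.ble rem (Nat.mul cap k) = true from Nat.ble_eq_true_of_le hle, ite'_true, force_eq] at h'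
      have hx0 := zer_le xs
      have h2 := inc_sound _ _ _ _ _ _ _ h' x (hx x (by simp)) (by rw [← hs]; simp) (by
        intro y hy1 hy2
        have := hck (y :: zer xs) (List.Forall₂.cons hy2 hx0)
        simpa [dN, dN_zer] using this)
      refine ih _ _ _ h2 xs (by omega) (fun y hy => hx y (by simp [hy])) ?_ ?_ ?_
      · rw [← hs]; simp
      · have : Nat.pred k = k - 1 := rfl
        omega
      · intro ys hys
        have := hck (x :: ys) (List.Forall₂.cons le_rfl hys)
        rwa [dN, ← add_assoc] at this

theorem runR_sound (K HI W1 hs WN J Dw : ℕ) (Ds : List ℕ) (Z k N d : ℕ)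
    (hd1 : 1 ≤ d) (hk1 : Ds.length + 1 = k) (R : ℕ) (hN : N = R * d) (xw : ℕ) (xs : List ℕ)
    (hl : xs.length = Ds.length) (hx : ∀ x ∈ xs, x ≤ xw) (hsum : k + xw + xs.sum = d + 2)
    (hck : ∀ yw ys, yw ≤ xw → List.Forall₂ (· ≤ ·) ys xs →
      chk K HI W1 (hs - ((R * WN) % 65536 ^ d + (R * WN) % 65536 ^ d * 65536 ^ J)) hs
        (Z + yw * Dw + dN ys Ds) = true) :
    ∀ d0, d ≤ d0 → runR K HI W1 hs WN J Dw Ds Z k N d0 = true → False := by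
  have hx0 := zer_le xs
  intro d0
  induction d0 with
  | zero => intro h; omega
  | succ d' ih =>
    intro hle h
    have h' : (force (Nat.succ d') fun d =>
      ite' (Nat.ble k (Nat.add d 2))
      (ite' (Nat.beq (Nat.mod N d) 0)
      (forceS (Nat.mod (Nat.mul (Nat.div N d) WN) (Nat.pow 65536 d)) fun nd0 =>
       forceS (Nat.sub hs (Nat.add nd0 (Nat.mul nd0 (Nat.pow 65536 J)))) fun nd =>
       ite' (chk K HI W1 nd hs Z)
        (force (Nat.sub (Nat.add d 2) k) fun rem => force (Nat.pred k) fun k' =>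
         ite' (inc (chk K HI W1 nd hs) Dw (fun Z rem e => go (chk K HI W1 nd hs) e Ds k' Z rem) rem rem 0 Z)
          (runR K HI W1 hs WN J Dw Ds Z k N d') false) (runR K HI W1 hs WN J Dw Ds Z k N d'))
      (runR K HI W1 hs WN J Dw Ds Z k N d')) true) = true := h
    clear h
    rw [force_eq, forceS_eq, forceS_eq, force_eq, force_eq] at h'
    rw [show Nat.ble k (Nat.add (Nat.succ d') 2) = true from Nat.ble_eq_true_of_le (by
      show k ≤ d' + 1 + 2
      omega), ite'_true] at h'
    by_cases hdd : d ≤ d'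
    · apply ih hdd
      cases h1 : Nat.beq (Nat.mod N (Nat.succ d')) 0 with
      | false => rw [h1, ite'_false] at h'; exact h'
      | true =>
        rw [h1, ite'_true] at h'
        generalize hc : chk _ _ _ _ _ _ = cc at h'
        cases cc with
        | false => rw [ite'_false] at h'; exact h'
        | true =>
          rw [ite'_true] at h'
          generalize hc : inc _ _ _ _ _ _ _ = cc at h'
          cases cc with
          | false => rw [ite'_false] at h'; cases h'
          | true => exact h'
    · have hdd : d = d' + 1 := by omega
      have e1 : Nat.beq (Nat.mod N (Nat.succ d')) 0 = true := by
        rw [Nat.beq_eq]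
        show N % (d' + 1) = 0
        rw [hN, hdd]; simp
      have e2 : Nat.div N (Nat.succ d') = R := by
        show N / (d' + 1) = R
        rw [hN, hdd]; simp
      rw [e1, ite'_true, e2] at h'
      have e3 : Nat.sub hs (Nat.add (Nat.mod (Nat.mul R WN) (Nat.pow 65536 (Nat.succ d')))
        (Nat.mul (Nat.mod (Nat.mul R WN) (Nat.pow 65536 (Nat.succ d'))) (Nat.pow 65536 J))) =
        (hs - ((R * WN) % 65536 ^ d + (R * WN) % 65536 ^ d * 65536 ^ J)) := by rw [hdd]; rfl
      rw [e3] at h'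
      have c0 := hck 0 _ (Nat.zero_le _) hx0
      rw [dN_zer, zero_mul, add_zero, add_zero] at c0
      rw [c0, ite'_true] at h'
      generalize hc : inc _ _ _ _ _ _ _ = cc at h'
      cases cc with
      | false => rw [ite'_false] at h'; cases h'
      | true =>
        have hrem : Nat.sub (Nat.add (Nat.succ d') 2) k = xw + xs.sum := by
          show d' + 1 + 2 - k = _
          omega
        rw [hrem] at hc
        have h2 := inc_sound _ _ _ _ _ _ _ hc xw (by omega) (by omega) (by
          intro y hy1 hy2
          have := hck y _ hy2 hx0
          rwa [dN_zer, add_zero] at this)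
        refine go_sound _ _ _ _ _ _ h2 xs hl (by simpa using hx) (by omega) ?_ ?_
        · show _ ≤ k - 1
          omega
        · intro ys hys
          exact hck xw ys le_rfl hys

end RPan

namespace RPan
open Finset

/-- two-row block -/
def blk (J : ℕ) (f g : ℕ → ℕ) : ℕ := pk 65536 (fun j => if j < J then f j else g (j - J)) (2 * J)

theorem blk_eq (J : ℕ) (f g : ℕ → ℕ) : blk J f g = pk 65536 f J + pk 65536 g J * 65536 ^ J := by
  unfold blk
  rw [two_mul, pk_append, mul_comm]
  congr 1
  · exact pk_congr fun i hi => by simp [hi]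
  · congr 1
    exact pk_congr fun i hi => by simp

theorem blk_congr {J : ℕ} {f g f' g' : ℕ → ℕ} (h : ∀ j < J, f j = f' j) (h' : ∀ j < J, g j = g' j) :
    blk J f g = blk J f' g' := by
  rw [blk_eq, blk_eq, pk_congr h, pk_congr h']

theorem blk_add (J : ℕ) (f g f' g' : ℕ → ℕ) : blk J f g + blk J f' g' = blk J (fun j => f j + f' j) (fun j => g j + g' j) := by
  simp only [blk_eq, ← pk_add]; ring

theorem blk_sub (J : ℕ) (f g f' g' : ℕ → ℕ) (h : ∀ j < J, f' j ≤ f j) (h' : ∀ j < J, g' j ≤ g j) :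
    blk J f g - blk J f' g' = blk J (fun j => f j - f' j) (fun j => g j - g' j) := by
  apply Nat.sub_eq_of_eq_add
  rw [blk_add]
  exact blk_congr (fun j hj => by have := h j hj; omega) (fun j hj => by have := h' j hj; omega)

theorem blk_le {J : ℕ} {f g f' g' : ℕ → ℕ} (h : ∀ j < J, f j ≤ f' j) (h' : ∀ j < J, g j ≤ g' j) :
    blk J f g ≤ blk J f' g' := by
  simp only [blk_eq, pk_eq_sum]
  gcongr with i hi i hi
  · exact h i (mem_range.1 hi)
  · exact h' i (mem_range.1 hi)

theorem blk_lt {J : ℕ} {f g : ℕ → ℕ} (h : ∀ j < J, f j < 65536) (h' : ∀ j < J, g j < 65536) :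
    blk J f g < 65536 ^ (2 * J) := by
  apply pk_lt
  intro i hi
  split
  · exact h _ (by omega)
  · exact h' _ (by omega)

theorem blk_land (J : ℕ) (f g f' g' : ℕ → ℕ) (h1 : ∀ j < J, f j < 65536) (h2 : ∀ j < J, g j < 65536)
    (h3 : ∀ j < J, f' j < 65536) (h4 : ∀ j < J, g' j < 65536) :
    blk J f g &&& blk J f' g' = blk J (fun j => f j &&& f' j) (fun j => g j &&& g' j) := by
  unfold blk
  rw [P16, pk_land]
  · apply pk_congr
    intro i hi
    dsimp
    split <;> rfl
  · intro i hi
    rw [← P16]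
    split
    · exact h1 _ (by omega)
    · exact h2 _ (by omega)
  · intro i hi
    rw [← P16]
    split
    · exact h3 _ (by omega)
    · exact h4 _ (by omega)

theorem blk_mul (J c : ℕ) (f g : ℕ → ℕ) : c * blk J f g = blk J (fun j => c * f j) (fun j => c * g j) := by
  simp only [blk_eq, ← pk_mul]; ring

theorem blk_sum (J n : ℕ) (f g : ℕ → ℕ → ℕ) : ∑ i ∈ range n, blk J (f i) (g i) =
    blk J (fun j => ∑ i ∈ range n, f i j) (fun j => ∑ i ∈ range n, g i j) := by
  induction n with
  | zero => simp [blk_eq, pk_eq_sum]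
  | succ n ih => rw [sum_range_succ, ih, blk_add]; simp only [sum_range_succ]

def WW (J : ℕ) : ℕ := 65536 ^ (2 * J + 1)
def vA (J : ℕ) : ℕ := pk 65536 (fun _ => 1) J
def vB (J : ℕ) : ℕ := vA J * 65536 ^ J
def Zs (J : ℕ) (X Y : ℕ → ℕ) : ℕ := pk (WW J) (fun i => X i * vA J + Y i * vB J) (2 * J)

theorem xAyB (J x y : ℕ) : x * vA J + y * vB J = blk J (fun _ => x) (fun _ => y) := by
  unfold vB vA
  rw [← mul_assoc, pk_mul, pk_mul, blk_eq]; simp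

theorem Zs_add (J : ℕ) (X Y X' Y' : ℕ → ℕ) : Zs J X Y + Zs J X' Y' = Zs J (fun i => X i + X' i) (fun i => Y i + Y' i) := by
  unfold Zs
  rw [pk_add]
  exact pk_congr fun i _ => by ring

theorem Zs_mul (J y : ℕ) (X Y : ℕ → ℕ) : y * Zs J X Y = Zs J (fun i => y * X i) (fun i => y * Y i) := by
  unfold Zs
  rw [pk_mul]
  exact pk_congr fun i _ => by ring

theorem WWpow (J : ℕ) : WW J = 2 ^ (16 * (2 * J + 1)) := by
  unfold WW; rw [P16, ← pow_mul]

theorem WWlt {J x : ℕ} (h : x < 65536 ^ (2 * J)) : x < WW J - 1 := by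
  have : WW J = 65536 ^ (2 * J) * 65536 := by unfold WW; rw [pow_succ]
  rw [this]
  have : 1 ≤ 65536 ^ (2 * J) := Nat.one_le_pow _ _ (by norm_num)
  omega

theorem div32768_pk (W : ℕ) (f : ℕ → ℕ) (n : ℕ) : pk W (fun i => 32768 * f i) n / 32768 = pk W f n := by
  rw [← pk_mul]; exact Nat.mul_div_cancel_left _ (by norm_num)

def vONd (J : ℕ) : ℕ := pk (WW J) (fun _ => 1) (2 * J)
def vK0 (J : ℕ) : ℕ := pk 65536 (fun j => 32776 + j) J
def vK (J : ℕ) : ℕ := vONd J * (vK0 J + vK0 J * 65536 ^ J)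
def vhs (J : ℕ) : ℕ := 32768 * (vA J + vB J)
def vHI (J : ℕ) : ℕ := vONd J * vhs J

theorem vhs_eq (J : ℕ) : vhs J = blk J (fun _ => 32768) (fun _ => 32768) := by
  unfold vhs; rw [mul_add, xAyB]

theorem chk_true {J : ℕ} (hJ : J ≤ 32) (need X Y : ℕ → ℕ) (hX : ∀ i < 2 * J, X i ≤ 32767) (hY : ∀ i < 2 * J, Y i ≤ 32767)
    (hn : ∀ j < J, need j ≤ 32768)
    (h1 : ∀ j < J, need j ≤ ∑ i ∈ range (2 * J), if X i ≤ 8 + j then 1 else 0)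
    (h2 : ∀ j < J, need j ≤ ∑ i ∈ range (2 * J), if Y i ≤ 8 + j then 1 else 0) :
    chk (vK J) (vHI J) (WW J - 1) (vhs J - (pk 65536 need J + pk 65536 need J * 65536 ^ J)) (vhs J) (Zs J X Y) = true := by
  have eK : vK J = pk (WW J) (fun _ => blk J (fun j => 32776 + j) (fun j => 32776 + j)) (2 * J) := by
    unfold vK vONd
    rw [pk_mul']
    exact pk_congr fun i _ => by rw [blk_eq]; simp [vK0]
  have eHI : vHI J = pk (WW J) (fun _ => blk J (fun j => 32768) (fun j => 32768)) (2 * J) := by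
    unfold vHI vONd
    rw [pk_mul', vhs_eq]
    simp
  have eZ : Zs J X Y = pk (WW J) (fun i => blk J (fun _ => X i) (fun _ => Y i)) (2 * J) := by
    unfold Zs
    exact pk_congr fun i _ => xAyB _ _ _
  have e1 : vK J - Zs J X Y = pk (WW J) (fun i => blk J (fun j => 32776 + j - X i) (fun j => 32776 + j - Y i)) (2 * J) := by
    have hle : ∀ i < 2 * J, blk J (fun _ => X i) (fun _ => Y i) ≤ blk J (fun j => 32776 + j) (fun j => 32776 + j) := by
      intro i hi
      exact blk_le (fun j hj => by have := hX i hi; omega) (fun j hj => by have := hY i hi; omega)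
    rw [eK, eZ, pk_sub _ _ _ _ hle]
    exact pk_congr fun i hi => blk_sub _ _ _ _ _ (fun j _ => by have := hX i hi; omega) (fun j _ => by have := hY i hi; omega)
  have hW : ∀ x, x < 65536 ^ (2 * J) → x < 2 ^ (16 * (2 * J + 1)) := by
    intro x hx
    have := WWlt hx
    rw [WWpow] at this
    omega
  have e2 : (vK J - Zs J X Y) &&& vHI J = pk (WW J) (fun i => 32768 * blk J (fun j => if X i ≤ 8 + j then 1 else 0)
      (fun j => if Y i ≤ 8 + j then 1 else 0)) (2 * J) := by
    rw [e1, eHI, WWpow, pk_land]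
    · apply pk_congr
      intro i hi
      rw [blk_land, blk_mul]
      · apply blk_congr
        · intro j hj
          have := hX i hi
          rw [land_32768 (by omega)]
          split <;> split <;> first | rfl | omega
        · intro j hj
          have := hY i hi
          rw [land_32768 (by omega)]
          split <;> split <;> first | rfl | omega
      all_goals intro j hj; omega
    · intro i hi
      apply hW
      apply blk_lt <;> intro j hj <;> omega
    · intro i hi
      apply hW
      apply blk_lt <;> intro j hj <;> omega
  have hcnt : ∀ U : ℕ → ℕ, ∀ j, (∑ i ∈ range (2 * J), if U i ≤ 8 + j then 1 else 0) ≤ 64 := by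
    intro U j
    calc _ ≤ ∑ i ∈ range (2 * J), 1 := sum_le_sum fun i _ => by split <;> omega
      _ ≤ 64 := by simp; omega
  unfold chk
  rw [Nat.beq_eq]
  show ((((vK J - Zs J X Y) &&& vHI J) / 32768) % (WW J - 1) + _) &&& vhs J = vhs J
  rw [e2, div32768_pk, pk_mod, blk_sum]
  · rw [← blk_eq, vhs_eq, blk_sub, blk_add, blk_land]
    · apply blk_congr
      · intro j hj
        have := hcnt X j
        have := h1 j hj
        have := hn j hj
        rw [land_32768 (by omega), if_pos (by omega)]
      · intro j hj
        have := hcnt Y j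
        have := h2 j hj
        have := hn j hj
        rw [land_32768 (by omega), if_pos (by omega)]
    · intro j hj
      have := hcnt X j
      omega
    · intro j hj
      have := hcnt Y j
      omega
    · intro j hj; omega
    · intro j hj; omega
    · exact hn
    · exact hn
  · rw [blk_sum]
    apply WWlt
    apply blk_lt
    · intro j hj
      have := hcnt X j
      omega
    · intro j hj
      have := hcnt Y j
      omega

def von (J : ℕ) : ℕ := pk 65536 (fun _ => 1) (2 * J)
def vvec (J : ℕ) (m : ℕ → ℕ) : ℕ := pk 65536 m (2 * J)
def vONs (J : ℕ) : ℕ := pk (65536 ^ (2 * J)) (fun _ => 1) (2 * J)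
def vDG (J : ℕ) : ℕ := pk (65536 ^ (2 * J)) (fun i => 65535 * 65536 ^ i) (2 * J)
def vD (J : ℕ) (m : ℕ → ℕ) : ℕ := Zs J m (fun i => 1 - m i)
def vBad (J : ℕ) (bad : ℕ → ℕ → ℕ) : ℕ := pk (WW J) (fun F => vvec J (fun E => bad E F)) (2 * J)

theorem vexpd (J : ℕ) (m : ℕ → ℕ) (hm : ∀ i < 2 * J, m i < 65536) :
    expd (vONs J) (vDG J) (vvec J m) = pk (WW J) m (2 * J) := expd_eq hm

theorem vmkD (J : ℕ) (m : ℕ → ℕ) (hm : ∀ i < 2 * J, m i ≤ 1) :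
    mkD (vONd J * vB J) (vB J - vA J) (pk (WW J) m (2 * J)) = vD J m := by
  show vONd J * vB J - pk (WW J) m (2 * J) * (vB J - vA J) = _
  have hAB : vA J ≤ vB J := by
    unfold vB
    exact Nat.le_mul_of_pos_right _ (by positivity)
  unfold vONd vD Zs
  rw [pk_mul', pk_mul', pk_sub]
  · apply pk_congr
    intro i hi
    have := hm i hi
    dsimp only
    generalize m i = a at *
    interval_cases a
    · simp
    · simp; omega
  · intro i hi
    have := hm i hi
    generalize m i = a at *
    interval_cases a
    · simp
    · simp

theorem vupd (J : ℕ) (bad : ℕ → ℕ → ℕ) (m : ℕ → ℕ) (hm : ∀ i < 2 * J, m i ≤ 1)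
    (hb : ∀ i < 2 * J, ∀ j < 2 * J, bad i j ≤ 1) :
    upd (von J) (vONd J) (vBad J bad) (vvec J m) (pk (WW J) m (2 * J)) =
      vBad J (fun E F => if bad E F = 1 ∨ (m F = 1 ∧ m E = 0) then 1 else 0) := by
  unfold upd
  rw [forceS_eq]
  show vBad J bad ||| (pk (WW J) m (2 * J) * von J - ((pk (WW J) m (2 * J) * von J) &&& (vvec J m * vONd J))) = _
  have hlt : ∀ f : ℕ → ℕ, (∀ i < 2 * J, f i ≤ 1) → vvec J f < WW J := by
    intro f hf
    have : vvec J f < 65536 ^ (2 * J) := pk_lt fun i hi => by have := hf i hi; omega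
    have := WWlt this
    omega
  have e1 : pk (WW J) m (2 * J) * von J = pk (WW J) (fun F => vvec J (fun E => m F)) (2 * J) := by
    rw [pk_mul']
    apply pk_congr
    intro i hi
    unfold von vvec
    rw [pk_mul]; simp
  have e2 : vvec J m * vONd J = pk (WW J) (fun F => vvec J m) (2 * J) := by
    unfold vONd
    rw [pk_mul]; simp
  have e3 : (pk (WW J) m (2 * J) * von J) &&& (vvec J m * vONd J) =
      pk (WW J) (fun F => vvec J (fun E => m F &&& m E)) (2 * J) := by
    rw [e1, e2, WWpow, pk_land]
    · apply pk_congr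
      intro i hi
      unfold vvec
      rw [P16, pk_land]
      · intro j hj; have := hm i hi; omega
      · intro j hj; have := hm j hj; omega
    · intro i hi; rw [← WWpow]; exact hlt _ fun j _ => hm i hi
    · intro i hi; rw [← WWpow]; exact hlt _ fun j hj => hm j hj
  have hand : ∀ i < 2 * J, ∀ j < 2 * J, m i &&& m j ≤ m i := fun i _ j _ => Nat.and_le_left
  have e4 : pk (WW J) m (2 * J) * von J - ((pk (WW J) m (2 * J) * von J) &&& (vvec J m * vONd J)) =
      pk (WW J) (fun F => vvec J (fun E => m F - (m F &&& m E))) (2 * J) := by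
    rw [e3, e1, pk_sub]
    · apply pk_congr
      intro i hi
      unfold vvec
      rw [pk_sub]
      intro j hj
      exact hand i hi j hj
    · intro i hi
      unfold vvec
      rw [pk_eq_sum, pk_eq_sum]
      exact sum_le_sum fun j hj => Nat.mul_le_mul_right _ (hand i hi j (mem_range.1 hj))
  rw [e4]
  unfold vBad
  rw [WWpow, pk_lor]
  · apply pk_congr
    intro i hi
    unfold vvec
    rw [P16, pk_lor]
    · apply pk_congr
      intro j hj
      have h1 := hm i hi
      have h2 := hm j hj
      have h3 := hb j hj i hi
      dsimp only
      generalize m i = a at *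
      generalize m j = b at *
      generalize bad j i = c at *
      interval_cases a <;> interval_cases b <;> interval_cases c <;> decide
    · intro j hj; have := hb j hj i hi; omega
    · intro j hj; have := hm i hi; omega
  · intro i hi; rw [← WWpow]; exact hlt _ fun j hj => hb j hj i hi
  · intro i hi; rw [← WWpow]; exact hlt _ fun j hj => by have := hm i hi; omega

end RPan

namespace RPan
open Finset

def dX : List ℕ → List (ℕ → ℕ) → ℕ → ℕ
  | y :: ys, m :: ms, i => y * m i + dX ys ms i
  | _, _, _ => 0
def dY : List ℕ → List (ℕ → ℕ) → ℕ → ℕ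
  | y :: ys, m :: ms, i => y * (1 - m i) + dY ys ms i
  | _, _, _ => 0

theorem Zs_zero (J : ℕ) : Zs J (fun _ => 0) (fun _ => 0) = 0 := by
  unfold Zs; rw [pk_eq_sum]; simp

theorem dN_map (J : ℕ) : ∀ (ys : List ℕ) (ms : List (ℕ → ℕ)), dN ys (ms.map (vD J)) = Zs J (dX ys ms) (dY ys ms)
  | [], ms => (Zs_zero J).symm
  | y :: ys, [] => (Zs_zero J).symm
  | y :: ys, m :: ms => by
    show y * vD J m + dN ys (ms.map (vD J)) = _
    rw [dN_map J ys ms]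
    unfold vD
    rw [Zs_mul, Zs_add]
    rfl

theorem dX_mono (ms : List (ℕ → ℕ)) (i : ℕ) : ∀ {ys xs : List ℕ}, List.Forall₂ (· ≤ ·) ys xs → dX ys ms i ≤ dX xs ms i := by
  intro ys xs h
  induction h generalizing ms with
  | nil => exact le_rfl
  | cons h _ ih =>
    cases ms with
    | nil => exact le_rfl
    | cons m ms => exact Nat.add_le_add (Nat.mul_le_mul_right _ h) (ih ms)

theorem dY_mono (ms : List (ℕ → ℕ)) (i : ℕ) : ∀ {ys xs : List ℕ}, List.Forall₂ (· ≤ ·) ys xs → dY ys ms i ≤ dY xs ms i := by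
  intro ys xs h
  induction h generalizing ms with
  | nil => exact le_rfl
  | cons h _ ih =>
    cases ms with
    | nil => exact le_rfl
    | cons m ms => exact Nat.add_le_add (Nat.mul_le_mul_right _ h) (ih ms)

theorem dXY (i : ℕ) : ∀ (xs : List ℕ) (ms : List (ℕ → ℕ)), xs.length = ms.length → (∀ m ∈ ms, m i ≤ 1) →
    dX xs ms i + dY xs ms i = xs.sum
  | [], [], _, _ => rfl
  | [], m :: ms, h, _ => by simp at h
  | x :: xs, [], h, _ => by simp at h
  | x :: xs, m :: ms, h, hm => by
    have := dXY i xs ms (by simpa using h) (fun m' hm' => hm m' (by simp [hm']))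
    have h1 : m i ≤ 1 := hm m (by simp)
    show x * m i + dX xs ms i + (x * (1 - m i) + dY xs ms i) = x + xs.sum
    rw [← this]
    have : m i = 0 ∨ m i = 1 := by omega
    rcases this with h | h <;> rw [h] <;> simp <;> ring

theorem pk_need (J d R : ℕ) (hR : R ≤ 1000) (hJ : J ≤ 32) : (R * pk 65536 Nat.succ J) % 65536 ^ d =
    pk 65536 (fun j => if j < d then R * (j + 1) else 0) J := by
  rw [pk_mul]
  by_cases h : d ≤ J
  · obtain ⟨e, rfl⟩ := Nat.exists_eq_add_of_le h
    rw [pk_append, Nat.add_mul_mod_self_left, Nat.mod_eq_of_lt, pk_append]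
    · rw [pk_congr (f := fun j => if d + j < d then R * (d + j + 1) else 0) (g := fun _ => 0)]
      · have : pk 65536 (fun _ => 0) e = 0 := by rw [pk_eq_sum]; simp
        rw [this, mul_zero, add_zero]
        exact pk_congr fun i hi => by simp [hi]
      · intro i hi; simp
    · apply pk_lt
      intro i hi
      calc R * Nat.succ i ≤ 1000 * 32 := Nat.mul_le_mul hR (by simp; omega)
        _ < _ := by norm_num
  · rw [Nat.mod_eq_of_lt]
    · exact pk_congr fun i hi => by rw [if_pos (by omega)]
    · calc _ < 65536 ^ J := pk_lt fun i hi => by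
            calc R * Nat.succ i ≤ 1000 * 32 := Nat.mul_le_mul hR (by simp; omega)
              _ < _ := by norm_num
        _ ≤ _ := Nat.pow_le_pow_right (by norm_num) (by omega)

theorem pk_pred (f : ℕ → ℕ) (n : ℕ) (h : f 0 = 1) :
    (pk 65536 f (n + 1)).pred = pk 65536 (fun i => if i = 0 then 0 else f i) (n + 1) := by
  rw [Nat.pred_eq_sub_one, pk_eq_sum, pk_eq_sum, sum_range_succ', sum_range_succ']
  simp [h]

theorem runType_sound {J : ℕ} (hJ : J ≤ 32) (hJ2 : 2 ≤ J) (bad : ℕ → ℕ → ℕ)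
    (hb : ∀ i < 2 * J, ∀ j < 2 * J, bad i j ≤ 1) (al : ℕ → ℕ)
    (hb0 : 2 * J - 2 ≤ ∑ F ∈ range (2 * J), bad 0 F)
    (hal : ∀ E < 2 * J, al E = if E ≠ 0 ∧ 2 * J - 2 ≤ ∑ F ∈ range (2 * J), bad E F then 1 else 0)
    (ts : ℕ → ℕ) (k : ℕ) (hts : ∀ i < 2 * J, ts i ≤ 5 + k) (mw : ℕ → ℕ) (hmw : ∀ i < 2 * J, mw i ≤ 1)
    (ms : List (ℕ → ℕ)) (hms : ∀ m ∈ ms, ∀ i < 2 * J, m i ≤ 1) (hk : ms.length + 1 = k)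
    (xw : ℕ) (xs : List ℕ) (hl : xs.length = ms.length) (hx : ∀ x ∈ xs, x ≤ xw)
    (v R : ℕ) (hv : k + xw + xs.sum = v) (hv3 : 3 ≤ v) (hR : 3 ≤ R)
    (hN : ∑ i ∈ range (2 * J), al i = R * (v - 2))
    (h1 : ∀ j < v - 2, R * (j + 1) ≤ ∑ i ∈ range (2 * J),
      if al i = 1 ∧ ts i + xw * mw i + dX xs ms i ≤ 3 + j then 1 else 0)
    (h2 : ∀ j < v - 2, R * (j + 1) ≤ ∑ i ∈ range (2 * J),
      if al i = 1 ∧ v ≤ ts i + xw * mw i + dX xs ms i + j then 1 else 0)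
    (h : runType (vK J) (vHI J) (WW J - 1) (vhs J) (pk 65536 Nat.succ J) J (vONs J) (vDG J) (von J) (32768 * von J)
      (vA J) (vB J) (2 * J - 2) (vD J mw) (vBad J bad) (vvec J ts) k (ms.map (vD J)) = true) : False := by
  have hal1 : ∀ i < 2 * J, al i ≤ 1 := by
    intro i hi; rw [hal i hi]; split <;> omega
  have hNle : R * (v - 2) ≤ 64 := by
    rw [← hN]
    calc _ ≤ ∑ i ∈ range (2 * J), 1 := sum_le_sum fun i hi => hal1 i (mem_range.1 hi)
      _ ≤ 64 := by simp; omega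
  have hvle : v ≤ 24 := by
    have : 3 * (v - 2) ≤ R * (v - 2) := Nat.mul_le_mul_right _ hR
    omega
  have hRle : R ≤ 64 := by
    calc R = R * 1 := by ring
      _ ≤ R * (v - 2) := Nat.mul_le_mul_left _ (by omega)
      _ ≤ 64 := hNle
  have hbs : ∀ E < 2 * J, ∑ F ∈ range (2 * J), bad E F ≤ 2 * J := by
    intro E hE
    calc _ ≤ ∑ i ∈ range (2 * J), 1 := sum_le_sum fun i hi => hb E hE i (mem_range.1 hi)
      _ = 2 * J := by simp
  unfold runType at h
  rw [forceS_eq, force_eq, forceS_eq, forceS_eq] at h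
  have eal : Nat.pred (Nat.div (Nat.land (Nat.add (Nat.mod (vBad J bad) (WW J - 1))
      (Nat.mul (Nat.sub 32768 (2 * J - 2)) (von J))) (32768 * von J)) 32768) = vvec J al := by
    show Nat.pred ((((vBad J bad) % (WW J - 1) + (32768 - (2 * J - 2)) * von J) &&& (32768 * von J)) / 32768) = _
    have e1 : (vBad J bad) % (WW J - 1) = vvec J (fun E => ∑ F ∈ range (2 * J), bad E F) := by
      have e0 : ∑ F ∈ range (2 * J), vvec J (fun E => bad E F) = vvec J (fun E => ∑ F ∈ range (2 * J), bad E F) := by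
        simp only [vvec, pk_eq_sum]
        rw [sum_comm]
        simp only [sum_mul]
      unfold vBad
      rw [pk_mod, e0]
      rw [e0]
      apply WWlt
      apply pk_lt
      intro i hi
      have := hbs i hi
      omega
    rw [e1]
    unfold von vvec
    rw [pk_mul, pk_mul, pk_add, P16, pk_land, ← P16]
    · rw [pk_congr (g := fun i => 32768 * (if 2 * J - 2 ≤ ∑ F ∈ range (2 * J), bad i F then 1 else 0)), div32768_pk]
      · obtain ⟨n, hn⟩ : ∃ n, 2 * J = n + 1 := ⟨2 * J - 1, by omega⟩
        have := pk_pred (fun i => if 2 * J - 2 ≤ ∑ F ∈ range (2 * J), bad i F then 1 else 0) n (by simp only [if_pos hb0])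
        rw [← hn] at this
        rw [this]
        apply pk_congr
        intro i hi
        rw [hal i hi]
        by_cases hi0 : i = 0 <;> simp [hi0]
      · intro i hi
        have := hbs i hi
        rw [mul_one, land_32768 (by omega)]
        split <;> split <;> first | rfl | omega
    · intro i hi
      have := hbs i hi
      norm_num; omega
    · intro i hi
      norm_num
  rw [eal] at h
  have eN : Nat.mod (vvec J al) 65535 = R * (v - 2) := by
    show vvec J al % (65536 - 1) = _
    rw [vvec, pk_mod, hN]
    rw [hN]; omega
  rw [eN] at h
  have edead : Nat.add (Nat.mul 1024 (Nat.sub (von J) (vvec J al))) (Nat.mul 5 (von J)) =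
      vvec J (fun i => 1024 * (1 - al i) + 5) := by
    show 1024 * (von J - vvec J al) + 5 * von J = _
    unfold von vvec
    rw [pk_sub _ _ _ _ hal1, pk_mul, pk_mul, pk_add]
  rw [edead] at h
  have eZ : Nat.add (Nat.mul (expd (vONs J) (vDG J) (Nat.add (vvec J (fun i => 1024 * (1 - al i) + 5)) (vvec J ts))) (vA J))
    (Nat.mul (expd (vONs J) (vDG J) (Nat.sub (Nat.add (vvec J (fun i => 1024 * (1 - al i) + 5))
      (Nat.mul (Nat.add 3 k) (von J))) (vvec J ts))) (vB J)) =
      Zs J (fun i => 1024 * (1 - al i) + 5 + ts i) (fun i => 1024 * (1 - al i) + 5 + (3 + k) - ts i) := by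
    show (expd (vONs J) (vDG J) (vvec J (fun i => 1024 * (1 - al i) + 5) + vvec J ts)) * vA J +
      (expd (vONs J) (vDG J) (vvec J (fun i => 1024 * (1 - al i) + 5) + (3 + k) * von J - vvec J ts)) * vB J = _
    have a1 : vvec J (fun i => 1024 * (1 - al i) + 5) + vvec J ts = vvec J (fun i => 1024 * (1 - al i) + 5 + ts i) :=
      pk_add _ _ _ _
    have a2 : vvec J (fun i => 1024 * (1 - al i) + 5) + (3 + k) * von J - vvec J ts =
        vvec J (fun i => 1024 * (1 - al i) + 5 + (3 + k) - ts i) := by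
      unfold vvec von
      rw [pk_mul, pk_add, pk_sub]
      · simp
      · intro i hi
        have := hts i hi
        omega
    rw [a1, a2, vexpd, vexpd, pk_mul', pk_mul', pk_add]
    · rfl
    · intro i hi; omega
    · intro i hi
      have := hts i hi
      omega
  rw [eZ] at h
  refine runR_sound _ _ _ _ _ _ _ _ _ _ _ (v - 2) (by omega) (by simpa using hk) R rfl xw xs (by simpa using hl) hx
    (by omega) ?_ _ ?_ h
  · intro yw ys hyw hys
    rw [pk_need J (v - 2) R (by omega) hJ, dN_map]
    unfold vD
    rw [Zs_mul, Zs_add, Zs_add]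
    have hle : ∀ i, i < 2 * J → dX ys ms i ≤ dX xs ms i ∧ dY ys ms i ≤ dY xs ms i ∧ dX xs ms i + dY xs ms i = xs.sum ∧
        yw * mw i ≤ xw * mw i ∧ yw * (1 - mw i) ≤ xw * (1 - mw i) ∧ xw * mw i + xw * (1 - mw i) = xw := by
      intro i hi
      refine ⟨dX_mono _ _ hys, dY_mono _ _ hys, dXY _ _ _ hl (fun m hm => hms m hm i hi), Nat.mul_le_mul_right _ hyw,
        Nat.mul_le_mul_right _ hyw, ?_⟩
      have := hmw i hi
      rw [← mul_add, show mw i + (1 - mw i) = 1 by omega, mul_one]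
    have hRj : ∀ j < v - 2, R * (j + 1) ≤ 64 := by
      intro j hj
      calc _ ≤ R * (v - 2) := Nat.mul_le_mul_left _ (by omega)
        _ ≤ _ := hNle
    apply chk_true hJ
    · intro i hi
      have := hle i hi
      have := hts i hi
      omega
    · intro i hi
      have := hle i hi
      omega
    · intro j hj
      split
      · have := hRj j (by assumption)
        omega
      · omega
    · intro j hj
      split
      · refine (h1 j (by assumption)).trans (sum_le_sum fun i hi => ?_)
        have := hle i (mem_range.1 hi)
        split
        · rw [if_pos]
          omega
        · exact Nat.zero_le _
      · exact Nat.zero_le _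
    · intro j hj
      split
      · refine (h2 j (by assumption)).trans (sum_le_sum fun i hi => ?_)
        have := hts i (mem_range.1 hi)
        have := hle i (mem_range.1 hi)
        split
        · rw [if_pos]
          omega
        · exact Nat.zero_le _
      · exact Nat.zero_le _
  · show v - 2 ≤ R * (v - 2) / 3
    rw [Nat.le_div_iff_mul_le (by norm_num), mul_comm]
    exact Nat.mul_le_mul_right _ hR

end RPan

namespace RPan
open Finset

def updB (m : ℕ → ℕ) (bad : ℕ → ℕ → ℕ) : ℕ → ℕ → ℕ :=
  fun E F => if bad E F = 1 ∨ (m F = 1 ∧ m E = 0) then 1 else 0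

theorem updB_le (m bad E F) : updB m bad E F ≤ 1 := by unfold updB; split <;> omega

/-- flip mask at label b -/
def flp (b : ℕ) (m : ℕ → ℕ) : ℕ → ℕ := fun q => m q ^^^ bitf (b + 1) q

theorem bitf_le (l q : ℕ) : bitf l q ≤ 1 := by
  have : (q / 2 ^ l) % 2 < 2 := Nat.mod_lt _ (by norm_num)
  show (q / 2 ^ l) % 2 ≤ 1
  omega

theorem flp_le {b : ℕ} {m : ℕ → ℕ} {q : ℕ} (h : m q ≤ 1) : flp b m q ≤ 1 := by
  have h2 := bitf_le (b+1) q
  unfold flp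
  generalize bitf (b+1) q = y at *
  generalize m q = x at *
  interval_cases x <;> interval_cases y <;> decide

def finBad : ℕ → (ℕ → ℕ) → (ℕ → ℕ → ℕ) → List (ℕ × ℕ) → (ℕ → ℕ → ℕ)
  | _, _, bad, [] => bad
  | p, m, bad, (p', b) :: t => finBad p' (flp b m) (if p' = p then bad else updB m bad) t

def gLen : ℕ → (ℕ → ℕ) → List (ℕ × ℕ) → ℕ → ℕ
  | _, _, [], _ => 0
  | p, m, (p', b) :: t, i => (p' - p) * m i + gLen p' (flp b m) t i

def gSum : ℕ → List (ℕ × ℕ) → ℕ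
  | _, [] => 0
  | p, (p', b) :: t => (p' - p) + gSum p' t

def WF (g : ℕ) : ℕ → ℕ → List (ℕ × ℕ) → Prop
  | _, _, [] => True
  | p, a, (p', b) :: t => p ≤ p' ∧ p' - p ≤ g ∧ (p = p' → b < a ∧ lexok a b (t.map Prod.snd) = true) ∧ b < 5 ∧ WF g p' b t

theorem zdfs_sound {J : ℕ} (hJ : J ≤ 32) (hJ2 : 2 ≤ J) (C : ℕ → ℕ) (hC : ∀ b < 5, C b = vvec J (bitf (b + 1)))
    (mw : ℕ → ℕ) (hmw : ∀ i < 2 * J, mw i ≤ 1) (xw v R : ℕ) (hv3 : 3 ≤ v) (hR : 3 ≤ R) (al len : ℕ → ℕ)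
    (hN : ∑ i ∈ range (2 * J), al i = R * (v - 2))
    (h1 : ∀ j < v - 2, R * (j + 1) ≤ ∑ i ∈ range (2 * J),
      if al i = 1 ∧ len i ≤ 3 + j then 1 else 0)
    (h2 : ∀ j < v - 2, R * (j + 1) ≤ ∑ i ∈ range (2 * J),
      if al i = 1 ∧ v ≤ len i + j then 1 else 0) :
    ∀ (sl : List (ℕ × ℕ)) (p a : ℕ) (m : ℕ → ℕ) (bad : ℕ → ℕ → ℕ) (ts : ℕ → ℕ) (k : ℕ) (ms : List (ℕ → ℕ)) (xs : List ℕ),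
    WF (xw + 1) p a sl →
    (∀ i < 2 * J, m i ≤ 1) →
    (∀ i < 2 * J, ∀ j < 2 * J, bad i j ≤ 1) →
    (2 * J - 2 ≤ ∑ F ∈ range (2 * J), finBad p m bad sl 0 F) →
    (∀ E < 2 * J, al E = if E ≠ 0 ∧ 2 * J - 2 ≤ ∑ F ∈ range (2 * J), finBad p m bad sl E F then 1 else 0) →
    (∀ i < 2 * J, ts i ≤ 5 + k) →
    (∀ m ∈ ms, ∀ i < 2 * J, m i ≤ 1) → (ms.length + 1 = k) →
    (xs.length = ms.length) → (∀ x ∈ xs, x ≤ xw) →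
    (k + xw + xs.sum + gSum p sl = v) →
    (∀ i < 2 * J, len i = ts i + xw * mw i + dX xs ms i + gLen p m sl i) →
    zdfs (vK J) (vHI J) (WW J - 1) (vhs J) (pk 65536 Nat.succ J) J (vONs J) (vDG J) (von J) (32768 * von J)
      (vA J) (vB J) (2 * J - 2) (vONd J) (vONd J * vB J) (vB J - vA J) (vD J mw) C (sl.map Prod.snd) a
      (vvec J m) (vBad J bad) (vvec J ts) k (ms.map (vD J)) = true → False := by
  intro sl
  induction sl with
  | nil =>
    intro p a m bad ts k ms xs _ hm hb hb0 hal hts hms hk hl hx hv hlen h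
    refine runType_sound hJ hJ2 bad hb al hb0 hal ts k hts mw hmw ms hms hk xw xs hl hx v R (by simpa [gSum] using hv)
      hv3 hR hN ?_ ?_ h
    · intro j hj
      refine (h1 j hj).trans_eq (sum_congr rfl fun i hi => ?_)
      rw [hlen i (mem_range.1 hi)]; rfl
    · intro j hj
      refine (h2 j hj).trans_eq (sum_congr rfl fun i hi => ?_)
      rw [hlen i (mem_range.1 hi)]; rfl
  | cons s sl ih =>
    obtain ⟨p', b⟩ := s
    intro p a m bad ts k ms xs hw hm hb hb0 hal hts hms hk hl hx hv hlen h
    obtain ⟨hpp, hgap, hz, hb5, hw'⟩ := hw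
    have h' : (forceS (Nat.xor (vvec J m) (C b)) fun M' =>
      ite' (forceS (expd (vONs J) (vDG J) (vvec J m)) fun eM =>
      forceS (mkD (vONd J * vB J) (vB J - vA J) eM) fun D =>
      forceS (upd (von J) (vONd J) (vBad J bad) (vvec J m) eM) fun Bad' =>
      forceS (Nat.add (vvec J ts) (vvec J m)) fun TS' =>
      force (Nat.succ k) fun k' =>
      zdfs (vK J) (vHI J) (WW J - 1) (vhs J) (pk 65536 Nat.succ J) J (vONs J) (vDG J) (von J) (32768 * von J)
      (vA J) (vB J) (2 * J - 2) (vONd J) (vONd J * vB J) (vB J - vA J) (vD J mw) C (sl.map Prod.snd) b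
      M' Bad' TS' k' (D :: ms.map (vD J))) (ite' (Nat.ble a b) true (ite' (lexok a b (sl.map Prod.snd)) 
      (zdfs (vK J) (vHI J) (WW J - 1) (vhs J) (pk 65536 Nat.succ J) J (vONs J) (vDG J) (von J) (32768 * von J)
      (vA J) (vB J) (2 * J - 2) (vONd J) (vONd J * vB J) (vB J - vA J) (vD J mw) C (sl.map Prod.snd) b
      M' (vBad J bad) (vvec J ts) k (ms.map (vD J))) true)) false) = true := h
    clear h
    rw [forceS_eq] at h'
    have eM' : Nat.xor (vvec J m) (C b) = vvec J (flp b m) := by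
      rw [hC b hb5]
      show vvec J m ^^^ vvec J (bitf (b+1)) = _
      unfold vvec
      rw [P16, pk_xor]
      · rfl
      · intro i hi; have := hm i hi; omega
      · intro i hi; have := bitf_le (b+1) i; omega
    rw [eM'] at h'
    have hm' : ∀ i < 2 * J, flp b m i ≤ 1 := fun i hi => flp_le (hm i hi)
    by_cases hp : p' = p
    · -- zero arc
      subst hp
      obtain ⟨hab, hlex⟩ := hz rfl
      generalize hc : (forceS (expd (vONs J) (vDG J) (vvec J m)) _) = cc at h'
      cases cc with
      | false => rw [ite'_false] at h'; cases h'
      | true =>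
        rw [ite'_true, hlex, show Nat.ble a b = false from Nat.not_le.2 hab |> fun h => by
          cases hh : Nat.ble a b with
          | false => rfl
          | true => exact absurd (Nat.le_of_ble_eq_true hh) h, ite'_false, ite'_true] at h'
        refine ih p' b (flp b m) bad ts k ms xs hw' hm' hb ?_ ?_ hts hms hk hl hx ?_ ?_ h'
        · simpa [finBad] using hb0
        · simpa [finBad] using hal
        · simpa [gSum] using hv
        · simpa [gLen] using hlen
    · generalize hc : (ite' (Nat.ble a b) _ _) = cc at h'
      rw [forceS_eq, forceS_eq, forceS_eq, forceS_eq, force_eq] at h'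
      have e2 : Nat.add (vvec J ts) (vvec J m) = vvec J (fun i => ts i + m i) := pk_add _ _ _ _
      rw [e2, vexpd J m (fun i hi => by have := hm i hi; omega), vmkD J m hm, vupd J bad m hm hb] at h'
      generalize hz : (zdfs _ _ _ _ _ _ _ _ _ _ _ _ _ _ _ _ _ _ _ _ _ _ _ _ _) = zz at h'
      cases zz with
      | false => rw [ite'_false] at h'; cases h'
      | true =>
        have hlt : p < p' := by omega
        refine ih p' b (flp b m) (updB m bad) (fun i => ts i + m i) (k+1) (m :: ms) ((p' - p - 1) :: xs) hw' hm'
          (fun i _ j _ => updB_le _ _ _ _) ?_ ?_ ?_ ?_ ?_ ?_ ?_ ?_ ?_ hz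
        · simpa [finBad, hp] using hb0
        · simpa [finBad, hp] using hal
        · intro i hi
          have := hts i hi
          have := hm i hi
          show ts i + m i ≤ _
          omega
        · intro m' hmm
          rcases List.mem_cons.1 hmm with rfl | hmm
          · exact hm
          · exact hms m' hmm
        · simp; omega
        · simp; omega
        · intro x hxx
          rcases List.mem_cons.1 hxx with rfl | hxx
          · omega
          · exact hx x hxx
        · rw [gSum] at hv
          simp; omega
        · intro i hi
          rw [hlen i hi]
          simp only [gLen, dX]
          obtain ⟨g, hg⟩ : ∃ g, p' - p = g + 1 := ⟨p' - p - 1, by omega⟩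
          rw [hg]; simp; ring

def bad0 : ℕ → ℕ → ℕ := updB (bitf 5) (updB (bitf 4) (updB (bitf 3) (updB (bitf 2) (updB (bitf 1) (updB (bitf 0) (fun _ _ => 0))))))
def ts0 (q : ℕ) : ℕ := bitf 1 q + (bitf 2 q + (bitf 3 q + (bitf 4 q + (bitf 5 q + bitf 0 q))))

theorem vBad_zero (J : ℕ) : vBad J (fun _ _ => 0) = 0 := by
  unfold vBad vvec
  simp [pk_eq_sum]

def selC (J : ℕ) : ℕ → ℕ := sel (vvec J (bitf 1)) (vvec J (bitf 2)) (vvec J (bitf 3)) (vvec J (bitf 4)) (vvec J (bitf 5))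

theorem selC_eq (J b : ℕ) (hb : b < 5) : selC J b = vvec J (bitf (b+1)) := by
  interval_cases b <;> rfl

theorem runWords_eq (c : ℕ) (ws : List (List ℕ)) (h : runWords c ws = true) (a : ℕ) (t : List ℕ) (ha : a < 5)
    (hw : (a :: t) ∈ ws) :
    zdfs (vK (2 ^ c)) (vHI (2 ^ c)) (WW (2 ^ c) - 1) (vhs (2 ^ c)) (pk 65536 Nat.succ (2 ^ c)) (2 ^ c) (vONs (2 ^ c))
      (vDG (2 ^ c)) (von (2 ^ c)) (32768 * von (2 ^ c))
      (vA (2 ^ c)) (vB (2 ^ c)) (2 * (2 ^ c) - 2) (vONd (2 ^ c)) (vONd (2 ^ c) * vB (2 ^ c)) (vB (2 ^ c) - vA (2 ^ c))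
      (vD (2 ^ c) (bitf 0)) (selC (2 ^ c)) t a
      (vvec (2 ^ c) (flp a (bitf 0))) (vBad (2 ^ c) bad0) (vvec (2 ^ c) ts0) 1 [] = true := by
  have e0 : Nat.pow 2 (Nat.succ c) = 2 * 2 ^ c := by
    show 2 ^ (c + 1) = _
    ring
  have hb : ∀ l, ∀ i < 2 * 2 ^ c, bitf l i ≤ 1 := fun l i _ => bitf_le l i
  have hb' : ∀ l, ∀ i < 2 * 2 ^ c, bitf l i < 65536 := fun l i _ => (bitf_le l i).trans_lt (by norm_num)
  unfold runWords at h
  rw [force_eq, e0, force_eq, force_eq, force_eq, force_eq] at h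
  rw [force_eq, show pk 65536 (fun _ => 1) (2 * 2 ^ c) = von (2 ^ c) from rfl] at h
  rw [force_eq, show Nat.mul 32768 (von (2 ^ c)) = 32768 * von (2 ^ c) from rfl] at h
  generalize hJ : Nat.pow 2 c = J at h
  have hJ' : 2 ^ c = J := hJ
  rw [hJ'] at h ⊢ hb hb'
  rw [force_eq, show pk (Nat.pow 65536 (2 * J)) (fun _ => 1) (2 * J) = vONs J from rfl] at h
  rw [force_eq, show pk (Nat.pow 65536 (2 * J)) (fun i => Nat.mul 65535 (Nat.pow 65536 i)) (2 * J) = vDG J from rfl] at h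
  rw [force_eq, show pk (Nat.pow 65536 (Nat.succ (2 * J))) (fun _ => 1) (2 * J) = vONd J from rfl] at h
  rw [force_eq, show pk 65536 (fun _ => 1) J = vA J from rfl] at h
  rw [force_eq, show Nat.mul (vA J) (Nat.pow 65536 J) = vB J from rfl] at h
  rw [force_eq, show Nat.sub (vB J) (vA J) = vB J - vA J from rfl] at h
  rw [force_eq, show Nat.mul (vONd J) (vB J) = vONd J * vB J from rfl] at h
  rw [force_eq, show pk 65536 (fun j => Nat.add 32776 j) J = vK0 J from rfl] at h
  rw [force_eq, show Nat.mul (vONd J) (Nat.add (vK0 J) (Nat.mul (vK0 J) (Nat.pow 65536 J))) = vK J from rfl] at h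
  rw [force_eq, show Nat.mul 32768 (Nat.add (vA J) (vB J)) = vhs J from rfl] at h
  rw [force_eq, show Nat.mul (vONd J) (vhs J) = vHI J from rfl] at h
  rw [force_eq] at h
  rw [force_eq, show pk 65536 (bitf 0) (2 * J) = vvec J (bitf 0) from rfl] at h
  rw [force_eq, show pk 65536 (bitf 1) (2 * J) = vvec J (bitf 1) from rfl] at h
  rw [force_eq, show pk 65536 (bitf 2) (2 * J) = vvec J (bitf 2) from rfl] at h
  rw [force_eq, show pk 65536 (bitf 3) (2 * J) = vvec J (bitf 3) from rfl] at h
  rw [force_eq, show pk 65536 (bitf 4) (2 * J) = vvec J (bitf 4) from rfl] at h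
  rw [force_eq, show pk 65536 (bitf 5) (2 * J) = vvec J (bitf 5) from rfl] at h
  have ets : Nat.add (vvec J (bitf 1)) (Nat.add (vvec J (bitf 2)) (Nat.add (vvec J (bitf 3)) (Nat.add (vvec J (bitf 4))
      (Nat.add (vvec J (bitf 5)) (vvec J (bitf 0)))))) = vvec J ts0 := by
    show vvec J (bitf 1) + (vvec J (bitf 2) + (vvec J (bitf 3) + (vvec J (bitf 4) + (vvec J (bitf 5) + vvec J (bitf 0))))) = _
    unfold vvec
    simp only [pk_add]
    rfl
  rw [force_eq, ets] at h
  rw [force_eq, vexpd J _ (hb' 0)] at h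
  rw [force_eq, vmkD J _ (hb 0)] at h
  have hle : ∀ m bad, ∀ i < 2 * J, ∀ j < 2 * J, updB m bad i j ≤ 1 := fun m bad i _ j _ => updB_le _ _ _ _
  have hu : ∀ l bad, (∀ i < 2 * J, ∀ j < 2 * J, bad i j ≤ 1) → upd (von J) (vONd J) (vBad J bad) (vvec J (bitf l))
      (pk (WW J) (bitf l) (2 * J)) = vBad J (updB (bitf l) bad) := fun l bad h => vupd J bad _ (hb l) h
  have hu0 := hu 0 (fun _ _ => 0) (fun _ _ _ _ => by norm_num)
  rw [vBad_zero] at hu0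
  rw [force_eq, hu0] at h
  rw [force_eq, vexpd J _ (hb' 1), hu 1 _ (hle _ _)] at h
  rw [force_eq, vexpd J _ (hb' 2), hu 2 _ (hle _ _)] at h
  rw [force_eq, vexpd J _ (hb' 3), hu 3 _ (hle _ _)] at h
  rw [force_eq, vexpd J _ (hb' 4), hu 4 _ (hle _ _)] at h
  rw [force_eq, vexpd J _ (hb' 5), hu 5 _ (hle _ _)] at h
  rw [force_eq] at h
  induction ws with
  | nil => simp at hw
  | cons w ws ih =>
    replace h := (show ite' _ _ _ = true from h)
    generalize hz : (List.rec true _ ws : Bool) = zz at h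
    generalize hc : (List.rec true _ w : Bool) = cc at h
    cases cc with
    | false => rw [ite'_false] at h; cases h
    | true =>
      rw [ite'_true] at h
      rcases List.mem_cons.1 hw with rfl | hw
      · replace hc := (show (forceS _ _) = true from hc)
        rw [forceS_eq] at hc
        have : Nat.xor (vvec J (bitf 0)) (selC J a) = vvec J (flp a (bitf 0)) := by
          rw [selC_eq J a ha]
          show vvec J (bitf 0) ^^^ vvec J (bitf (a+1)) = _
          unfold vvec
          rw [P16, pk_xor]
          · rfl
          · exact hb' 0
          · exact hb' (a+1)
        rw [← this]
        exact hc
      · exact ih hw (hz.trans h)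

end RPan

namespace RPan
open Finset

/-! slots and words -/

def ins (s : ℕ × ℕ) : List (ℕ × ℕ) → List (ℕ × ℕ)
  | [] => [s]
  | s' :: t => if s.1 ≤ s'.1 then s :: s' :: t else s' :: ins s t

def slots (A B : ℕ → ℕ) : ℕ → List (ℕ × ℕ)
  | 0 => []
  | k + 1 => (A k, k) :: ins (B k, k) (slots A B k)

theorem ins_perm (s : ℕ × ℕ) : ∀ t, (ins s t).Perm (s :: t)
  | [] => List.Perm.refl _
  | s' :: t => by
    unfold ins
    split
    · exact List.Perm.refl _
    · exact ((ins_perm s t).cons s').trans (List.Perm.swap _ _ _)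

theorem mem_ins {s x : ℕ × ℕ} {t : List (ℕ × ℕ)} : x ∈ ins s t ↔ x = s ∨ x ∈ t := by
  rw [(ins_perm s t).mem_iff]; simp

theorem ins_insAll (s : ℕ × ℕ) : ∀ t, (ins s t).map Prod.snd ∈ insAll s.2 (t.map Prod.snd)
  | [] => by simp [ins, insAll]
  | s' :: t => by
    have := ins_insAll s t
    unfold ins
    split
    · simp [insAll]
    · simp only [List.map_cons, insAll, List.mem_cons, List.mem_map]
      exact Or.inr ⟨_, this, rfl⟩

theorem slots_words (A B : ℕ → ℕ) : ∀ k, (slots A B k).map Prod.snd ∈ words k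
  | 0 => by simp [slots, words]
  | k + 1 => by
    simp only [slots, words, List.mem_flatMap, List.mem_map, List.map_cons]
    exact ⟨_, slots_words A B k, _, ins_insAll (B k, k) _, rfl⟩

theorem mem_slots {A B : ℕ → ℕ} {x : ℕ × ℕ} : ∀ {k}, x ∈ slots A B k ↔ ∃ j < k, x = (A j, j) ∨ x = (B j, j)
  | 0 => by simp [slots]
  | k + 1 => by
    simp only [slots, List.mem_cons, mem_ins, mem_slots (k := k)]
    constructor
    · rintro (h | h | ⟨j, hj, h⟩)
      · exact ⟨k, by omega, Or.inl h⟩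
      · exact ⟨k, by omega, Or.inr h⟩
      · exact ⟨j, by omega, h⟩
    · rintro ⟨j, hj, h⟩
      by_cases hjk : j = k
      · subst hjk; tauto
      · exact Or.inr (Or.inr ⟨j, by omega, h⟩)

def Rl (x y : ℕ × ℕ) : Prop := x.1 < y.1 ∨ (x.1 = y.1 ∧ y.2 < x.2)

theorem ins_pairwise (s : ℕ × ℕ) : ∀ t, (∀ x ∈ t, x.2 < s.2) → t.Pairwise Rl → (ins s t).Pairwise Rl
  | [], _, _ => by simp [ins]
  | s' :: t, h, hp => by
    have ih := ins_pairwise s t (fun x hx => h x (by simp [hx])) (List.pairwise_cons.1 hp).2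
    unfold ins
    split
    · rename_i hle
      rw [List.pairwise_cons]
      refine ⟨?_, hp⟩
      intro x hx
      have h2 := h x hx
      have h3 : s'.1 ≤ x.1 := by
        rcases List.mem_cons.1 hx with rfl | hx
        · exact le_rfl
        · have := (List.pairwise_cons.1 hp).1 x hx
          unfold Rl at this; omega
      unfold Rl; omega
    · rw [List.pairwise_cons]
      refine ⟨?_, ih⟩
      intro x hx
      rcases mem_ins.1 hx with rfl | hx
      · unfold Rl; omega
      · exact (List.pairwise_cons.1 hp).1 x hx

theorem slots_pairwise {A B : ℕ → ℕ} : ∀ k, (∀ j < k, A j < B j) → (∀ i j, i < j → j < k → A j ≤ A i) →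
    (slots A B k).Pairwise Rl
  | 0, _, _ => by simp [slots]
  | k + 1, h, h' => by
    have ih := slots_pairwise k (fun j hj => h j (by omega)) (fun i j hi hj => h' i j hi (by omega))
    unfold slots
    have hlab : ∀ x ∈ slots A B k, x.2 < k := by
      intro x hx
      obtain ⟨j, hj, rfl | rfl⟩ := mem_slots.1 hx <;> exact hj
    rw [List.pairwise_cons]
    refine ⟨?_, ins_pairwise _ _ hlab ih⟩
    intro x hx
    rcases mem_ins.1 hx with rfl | hx
    · exact Or.inl (h k (by omega))
    · have h1 := hlab x hx
      obtain ⟨j, hj, rfl | rfl⟩ := mem_slots.1 hx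
      · have := h' j k hj (by omega)
        unfold Rl; dsimp; omega
      · have := h' j k hj (by omega)
        have := h j (by omega)
        unfold Rl; dsimp; omega

theorem lexok_slots (a b : ℕ) (hab : a ≠ b) : ∀ t : List (ℕ × ℕ), t.Pairwise Rl →
    (∀ x y, (x, a) ∈ t → (y, b) ∈ t → x < y) → lexok a b (t.map Prod.snd) = true
  | [], _, _ => rfl
  | (p, l) :: t, hp, h => by
    rw [List.pairwise_cons] at hp
    simp only [List.map_cons, lexok]
    by_cases h1 : l = a
    · rw [show Nat.beq l a = true from by rw [Nat.beq_eq]; exact h1, ite'_true]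
    · have e1 : Nat.beq l a = false := by
        cases hh : Nat.beq l a
        · rfl
        · rw [Nat.beq_eq] at hh; exact absurd hh h1
      rw [e1, ite'_false]
      by_cases h2 : l = b
      · subst h2
        rw [show Nat.beq l l = true from by rw [Nat.beq_eq], ite'_true]
        rw [Bool.not_eq_true', List.any_eq_false]
        intro x hx hx2
        rw [Nat.beq_eq] at hx2
        subst hx2
        obtain ⟨⟨x1, a1⟩, hx1, hxa⟩ := List.mem_map.1 hx
        dsimp at hxa
        subst hxa
        have h3 := h x1 p (by simp [hx1]) (by simp)
        have h4 := hp.1 _ hx1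
        unfold Rl at h4; dsimp at h4; omega
      · have e2 : Nat.beq l b = false := by
          cases hh : Nat.beq l b
          · rfl
          · rw [Nat.beq_eq] at hh; exact absurd hh h2
        rw [e2, ite'_false]
        exact lexok_slots a b hab t hp.2 fun x y hx hy => h x y (by simp [hx]) (by simp [hy])

theorem WF_of (A B : ℕ → ℕ) (c g : ℕ) (hc5 : c ≤ 5) (hAB : ∀ j < c, A j < B j)
    (htie : ∀ i j, i < j → j < c → A j = A i → B j < B i) : ∀ (sl pre : List (ℕ × ℕ)) (p a : ℕ),
    (pre ++ (p, a) :: sl).Pairwise Rl → (∀ x, x ∈ pre ++ (p, a) :: sl ↔ ∃ j < c, x = (A j, j) ∨ x = (B j, j)) →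
    (∀ p p', (∃ j < c, p = A j ∨ p = B j) → (∃ j < c, p' = A j ∨ p' = B j) → p < p' →
      (∀ x, (∃ j < c, x = A j ∨ x = B j) → x ≤ p ∨ p' ≤ x) → p' - p ≤ g) → WF g p a sl
  | [], _, _, _, _, _, _ => trivial
  | (p', b) :: t, pre, p, a, hp, hmem, hgap => by
    have ih := WF_of A B c g hc5 hAB htie t (pre ++ [(p, a)]) p' b (by simpa using hp) (by simpa using hmem) hgap
    have hp' := hp
    rw [List.pairwise_append] at hp'
    obtain ⟨hp1, hp2, hp3⟩ := hp'
    rw [List.pairwise_cons, List.pairwise_cons] at hp2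
    obtain ⟨hp4, hp5, hp6⟩ := hp2
    have hR := hp4 (p', b) (by simp)
    have hle : p ≤ p' := by unfold Rl at hR; dsimp at hR; omega
    have hpm := (hmem (p, a)).1 (by simp)
    have hpm' := (hmem (p', b)).1 (by simp)
    refine ⟨hle, ?_, ?_, ?_, ih⟩
    · by_cases heq : p = p'
      · omega
      · apply hgap p p'
        · obtain ⟨j, hj, h | h⟩ := hpm <;> refine ⟨j, hj, ?_⟩ <;> simp at h <;> tauto
        · obtain ⟨j, hj, h | h⟩ := hpm' <;> refine ⟨j, hj, ?_⟩ <;> simp at h <;> tauto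
        · omega
        · rintro x ⟨j, hj, hx⟩
          have hm : (x, j) ∈ pre ++ (p, a) :: (p', b) :: t := (hmem (x, j)).2 ⟨j, hj, by rcases hx with rfl | rfl <;> simp⟩
          simp only [List.mem_append, List.mem_cons] at hm
          rcases hm with hm | hm | hm | hm
          · have := hp3 _ hm (p, a) (by simp)
            unfold Rl at this; dsimp at this; omega
          · simp at hm; omega
          · simp at hm; omega
          · have := hp5 _ hm
            unfold Rl at this; dsimp at this; omega
    · intro heq
      subst heq
      have hab : b < a := by unfold Rl at hR; dsimp at hR; omega
      refine ⟨hab, lexok_slots a b (by omega) t hp6 ?_⟩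
      intro x y hx hy
      have h1 := hp4 (x, a) (by simp [hx])
      have h2 := hp5 (y, b) hy
      have h3 := (hmem (x, a)).1 (by simp [hx])
      have h4 := (hmem (y, b)).1 (by simp [hy])
      unfold Rl at h1 h2
      dsimp at h1 h2
      simp only [Prod.mk.injEq] at hpm hpm' h3 h4
      obtain ⟨j1, hj1, h5⟩ := hpm
      obtain ⟨j2, hj2, h6⟩ := hpm'
      obtain ⟨j3, hj3, h7⟩ := h3
      obtain ⟨j4, hj4, h8⟩ := h4
      obtain rfl : j1 = a := by omega
      obtain rfl : j2 = b := by omega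
      obtain rfl : j3 = j1 := by omega
      obtain rfl : j4 = j2 := by omega
      have := hAB _ hj3
      have := hAB _ hj4
      have := htie j4 j3 hab hj3 (by omega)
      omega
    · obtain ⟨j, hj, h | h⟩ := hpm' <;> simp at h <;> omega

/-! states -/

def msum (sl : List (ℕ × ℕ)) (q x : ℕ) : ℕ := (sl.map fun s => if s.1 ≤ x then bitf (s.2 + 1) q else 0).sum
def mst (m : ℕ → ℕ) (sl : List (ℕ × ℕ)) (q x : ℕ) : ℕ := (m q + msum sl q x) % 2

def lst : ℕ → List (ℕ × ℕ) → ℕ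
  | p, [] => p
  | _, (p', _) :: t => lst p' t

def Srt : ℕ → List (ℕ × ℕ) → Prop
  | _, [] => True
  | p, (p', _) :: t => p ≤ p' ∧ Srt p' t

theorem le_lst : ∀ (p : ℕ) (sl : List (ℕ × ℕ)), Srt p sl → p ≤ lst p sl
  | p, [], _ => le_rfl
  | p, (p', _) :: t, h => h.1.trans (le_lst p' t h.2)

theorem Srt_le : ∀ (p : ℕ) (sl : List (ℕ × ℕ)), Srt p sl → ∀ s ∈ sl, p ≤ s.1
  | p, [], _, s, hs => by simp at hs
  | p, (p', b) :: t, h, s, hs => by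
    rcases List.mem_cons.1 hs with rfl | hs
    · exact h.1
    · exact h.1.trans (Srt_le p' t h.2 s hs)

theorem le_lst' : ∀ (p : ℕ) (sl : List (ℕ × ℕ)), Srt p sl → ∀ s ∈ sl, s.1 ≤ lst p sl
  | p, [], _, s, hs => by simp at hs
  | p, (p', b) :: t, h, s, hs => by
    rcases List.mem_cons.1 hs with rfl | hs
    · exact le_lst p' t h.2
    · exact le_lst' p' t h.2 s hs

theorem lst_mem : ∀ (p : ℕ) (sl : List (ℕ × ℕ)), lst p sl = p ∨ ∃ s ∈ sl, lst p sl = s.1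
  | p, [] => Or.inl rfl
  | p, (p', b) :: t => by
    right
    rcases lst_mem p' t with h | ⟨s, hs, h⟩
    · exact ⟨(p', b), by simp, h⟩
    · exact ⟨s, by simp [hs], h⟩

theorem msum_zero (sl : List (ℕ × ℕ)) (q x : ℕ) (h : ∀ s ∈ sl, x < s.1) : msum sl q x = 0 := by
  unfold msum
  rw [List.sum_eq_zero]
  intro y hy
  obtain ⟨s, hs, rfl⟩ := List.mem_map.1 hy
  have := h s hs
  rw [if_neg (by omega)]

theorem mst_lt (m : ℕ → ℕ) (p b : ℕ) (t : List (ℕ × ℕ)) (q x : ℕ) (hs : Srt p t) (hx : x < p) (hm : m q ≤ 1) :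
    mst m ((p, b) :: t) q x = m q := by
  unfold mst
  rw [msum_zero]
  · omega
  · intro s hs'
    rcases List.mem_cons.1 hs' with rfl | hs'
    · exact hx
    · exact hx.trans_le (Srt_le p t hs s hs')

theorem flp_eq (b : ℕ) (m : ℕ → ℕ) (q : ℕ) (h : m q ≤ 1) : flp b m q = (m q + bitf (b + 1) q) % 2 := by
  have h2 := bitf_le (b+1) q
  unfold flp
  generalize bitf (b+1) q = y at *
  generalize m q = x at *
  interval_cases x <;> interval_cases y <;> decide

theorem mst_ge (m : ℕ → ℕ) (p b : ℕ) (t : List (ℕ × ℕ)) (q x : ℕ) (hx : p ≤ x) (hm : m q ≤ 1) :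
    mst m ((p, b) :: t) q x = mst (flp b m) t q x := by
  unfold mst
  rw [flp_eq _ _ _ hm]
  unfold msum
  simp only [List.map_cons, List.sum_cons, if_pos hx]
  omega

theorem gLen_eq : ∀ (sl : List (ℕ × ℕ)) (p : ℕ) (m : ℕ → ℕ) (q : ℕ), Srt p sl → m q ≤ 1 →
    gLen p m sl q = ∑ x ∈ Ico p (lst p sl), mst m sl q x
  | [], p, m, q, _, _ => by simp [gLen, lst]
  | (p', b) :: t, p, m, q, h, hm => by
    simp only [gLen, lst]
    rw [gLen_eq t p' _ q h.2 (flp_le hm), ← sum_Ico_consecutive _ h.1 (le_lst p' t h.2)]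
    congr 1
    · rw [sum_congr rfl (g := fun _ => m q)]
      · simp
      · intro x hx
        exact mst_lt _ _ _ _ _ _ h.2 (mem_Ico.1 hx).2 hm
    · apply sum_congr rfl
      intro x hx
      exact (mst_ge _ _ _ _ _ _ (mem_Ico.1 hx).1 hm).symm

theorem gSum_eq : ∀ (sl : List (ℕ × ℕ)) (p : ℕ), Srt p sl → p + gSum p sl = lst p sl
  | [], p, _ => rfl
  | (p', b) :: t, p, h => by
    have := gSum_eq t p' h.2
    have := h.1
    simp only [gSum, lst]; omega

theorem updB_one (m bad E F) : updB m bad E F = 1 ↔ bad E F = 1 ∨ (m F = 1 ∧ m E = 0) := by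
  unfold updB; split <;> simp_all

theorem finBad_eq : ∀ (sl : List (ℕ × ℕ)) (p : ℕ) (m : ℕ → ℕ) (bad : ℕ → ℕ → ℕ) (E F : ℕ), Srt p sl → (∀ q, m q ≤ 1) →
    (finBad p m bad sl E F = 1 ↔ bad E F = 1 ∨ ∃ x, p ≤ x ∧ x < lst p sl ∧ mst m sl F x = 1 ∧ mst m sl E x = 0)
  | [], p, m, bad, E, F, _, _ => by
    simp only [finBad, lst]
    constructor
    · exact Or.inl
    · rintro (h | ⟨x, h1, h2, _⟩)
      · exact h
      · omega
  | (p', b) :: t, p, m, bad, E, F, h, hm => by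
    simp only [finBad, lst]
    rw [finBad_eq t p' _ _ E F h.2 (fun q => flp_le (hm q))]
    have hl := le_lst p' t h.2
    have hpp := h.1
    constructor
    · rintro (hh | ⟨x, h1, h2, h3, h4⟩)
      · by_cases hp : p' = p
        · rw [if_pos hp] at hh; exact Or.inl hh
        · rw [if_neg hp, updB_one] at hh
          rcases hh with hh | ⟨h1, h2⟩
          · exact Or.inl hh
          · right
            refine ⟨p, le_rfl, by omega, ?_, ?_⟩
            · rw [mst_lt _ _ _ _ _ _ h.2 (by omega) (hm _)]; exact h1
            · rw [mst_lt _ _ _ _ _ _ h.2 (by omega) (hm _)]; exact h2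
      · right
        refine ⟨x, by omega, h2, ?_, ?_⟩
        · rw [mst_ge _ _ _ _ _ _ h1 (hm _)]; exact h3
        · rw [mst_ge _ _ _ _ _ _ h1 (hm _)]; exact h4
    · rintro (hh | ⟨x, h1, h2, h3, h4⟩)
      · left
        split
        · exact hh
        · rw [updB_one]; exact Or.inl hh
      · by_cases hx : x < p'
        · left
          rw [if_neg (by omega), updB_one]
          rw [mst_lt _ _ _ _ _ _ h.2 hx (hm _)] at h3 h4
          exact Or.inr ⟨h3, h4⟩
        · right
          rw [mst_ge _ _ _ _ _ _ (by omega) (hm _)] at h3 h4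
          exact ⟨x, by omega, h2, h3, h4⟩

theorem finBad_le : ∀ (sl : List (ℕ × ℕ)) (p : ℕ) (m : ℕ → ℕ) (bad : ℕ → ℕ → ℕ) (E F : ℕ), bad E F ≤ 1 →
    finBad p m bad sl E F ≤ 1
  | [], p, m, bad, E, F, h => h
  | (p', b) :: t, p, m, bad, E, F, h => by
    simp only [finBad]
    apply finBad_le
    split
    · exact h
    · exact updB_le _ _ _ _

theorem bad0_one (E F : ℕ) : bad0 E F = 1 ↔ ∃ l < 6, bitf l F = 1 ∧ bitf l E = 0 := by
  unfold bad0
  simp only [updB_one]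
  constructor
  · rintro ((((((h | h) | h) | h) | h) | h) | h)
    · simp at h
    all_goals exact ⟨_, by norm_num, h⟩
  · rintro ⟨l, hl, h⟩
    interval_cases l <;> tauto

end RPan

namespace RPan
open Finset

/-- state of Hamiltonian edge x in candidate q -/
def hst (c : ℕ) (A B : ℕ → ℕ) (q x : ℕ) : ℕ :=
  (bitf 0 q + ∑ j ∈ range c, if A j ≤ x ∧ x < B j then bitf (j + 1) q else 0) % 2

def Valid (c v : ℕ) (A B : ℕ → ℕ) (q : ℕ) : Prop :=
  q ≠ 0 ∧ ∀ F < 2 ^ (c + 1), (∀ l < c + 1, bitf l F ≤ bitf l q) → (∀ x < v, hst c A B F x ≤ hst c A B q x) → F = 0 ∨ F = q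

def clen (c v : ℕ) (A B : ℕ → ℕ) (q : ℕ) : ℕ := (∑ j ∈ range c, bitf (j + 1) q) + ∑ x ∈ range v, hst c A B q x

theorem msum_slots (A B : ℕ → ℕ) (q x : ℕ) : ∀ c, msum (slots A B c) q x =
    ∑ j ∈ range c, ((if A j ≤ x then bitf (j + 1) q else 0) + (if B j ≤ x then bitf (j + 1) q else 0))
  | 0 => by simp [slots, msum]
  | c + 1 => by
    have ih := msum_slots A B q x c
    rw [sum_range_succ, ← ih]
    have e : slots A B (c + 1) = (A c, c) :: ins (B c, c) (slots A B c) := rfl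
    unfold msum
    rw [e, List.map_cons, List.sum_cons, ((ins_perm (B c, c) (slots A B c)).map _).sum_eq, List.map_cons, List.sum_cons]
    ring

theorem hst_eq (c : ℕ) (A B : ℕ → ℕ) (hAB : ∀ j < c, A j < B j) (q x : ℕ) :
    hst c A B q x = mst (bitf 0) (slots A B c) q x := by
  unfold hst mst
  rw [msum_slots]
  have : ∀ c, (∀ j < c, A j < B j) → (∑ j ∈ range c, if A j ≤ x ∧ x < B j then bitf (j + 1) q else 0) % 2 =
      (∑ j ∈ range c, ((if A j ≤ x then bitf (j + 1) q else 0) + (if B j ≤ x then bitf (j + 1) q else 0))) % 2 := by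
    intro c
    induction c with
    | zero => intro _; rfl
    | succ c ih =>
      intro h
      rw [sum_range_succ, sum_range_succ]
      have h1 := ih fun j hj => h j (by omega)
      have h2 := h c (by omega)
      split_ifs <;> omega
  have := this c hAB
  omega

theorem hst_le (c A B q x) : hst c A B q x ≤ 1 := by unfold hst; omega

theorem Srt_of_pairwise : ∀ (p b : ℕ) (sl : List (ℕ × ℕ)), ((p, b) :: sl).Pairwise Rl → Srt p sl
  | _, _, [], _ => trivial
  | p, b, (p', b') :: t, h => by
    rw [List.pairwise_cons] at h
    refine ⟨?_, Srt_of_pairwise p' b' t h.2⟩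
    have := h.1 (p', b') (by simp)
    unfold Rl at this; dsimp at this; omega

theorem bitf_zero_of_lt {q l c : ℕ} (h : q < 2 ^ c) (hl : c ≤ l) : bitf l q = 0 := by
  show q / 2 ^ l % 2 = 0
  rw [Nat.div_eq_of_lt]
  exact h.trans_le (Nat.pow_le_pow_right (by norm_num) hl)

theorem exists_bitf {q : ℕ} (h : q ≠ 0) : ∃ l, bitf l q = 1 := by
  obtain ⟨l, hl⟩ := Nat.exists_testBit_of_ne_zero h
  refine ⟨l, ?_⟩
  rw [Nat.testBit_eq_decide_div_mod_eq] at hl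
  exact of_decide_eq_true hl

theorem bitf_zero (l : ℕ) : bitf l 0 = 0 := by
  show 0 / 2 ^ l % 2 = 0
  simp

theorem hst_zero (c A B x) : hst c A B 0 x = 0 := by
  unfold hst
  simp [bitf_zero]

theorem core (c : ℕ) (hc1 : 1 ≤ c) (hc5 : c ≤ 5) (hok : ∀ w ∈ words c, ∃ ws, w ∈ ws ∧ runWords c ws = true)
    (v : ℕ) (hv : 3 ≤ v) (A B : ℕ → ℕ) (hAB : ∀ j < c, A j < B j) (hBv : ∀ j < c, B j < v)
    (hanti : ∀ i j, i < j → j < c → A j ≤ A i) (htie : ∀ i j, i < j → j < c → A j = A i → B j < B i)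
    (hgap : ∀ p p', (∃ j < c, p = A j ∨ p = B j) → (∃ j < c, p' = A j ∨ p' = B j) → p < p' →
      (∀ x, (∃ j < c, x = A j ∨ x = B j) → x ≤ p ∨ p' ≤ x) →
      ∀ x, (∃ j < c, x = A j ∨ x = B j) → p' - p + x ≤ v)
    (r : ℕ) (hr : 3 ≤ r)
    (hcnt : ∀ k, 3 ≤ k → k ≤ v → {q | q < 2 ^ (c + 1) ∧ Valid c v A B q ∧ clen c v A B q = k}.ncard = r)
    (hlen : ∀ q < 2 ^ (c + 1), Valid c v A B q → 3 ≤ clen c v A B q ∧ clen c v A B q ≤ v) : False := by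
  classical
  have hn : 2 ^ (c + 1) = 2 * 2 ^ c := by ring
  rw [hn] at hcnt hlen
  have hJ : 2 ^ c ≤ 32 := by
    calc 2 ^ c ≤ 2 ^ 5 := Nat.pow_le_pow_right (by norm_num) hc5
      _ = 32 := by norm_num
  have hJ2 : 2 ≤ 2 ^ c := by
    calc 2 = 2 ^ 1 := by norm_num
      _ ≤ 2 ^ c := Nat.pow_le_pow_right (by norm_num) hc1
  have hpw := slots_pairwise c hAB hanti
  have hmem : ∀ x, x ∈ slots A B c ↔ ∃ j < c, x = (A j, j) ∨ x = (B j, j) := fun x => mem_slots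
  have hwords := slots_words A B c
  have hst' := hst_eq c A B hAB
  obtain ⟨c', rfl⟩ : ∃ c', c = c' + 1 := ⟨c - 1, by omega⟩
  obtain ⟨sl, hsl⟩ : ∃ sl, slots A B (c' + 1) = (A c', c') :: sl := ⟨_, rfl⟩
  generalize hcc : c' + 1 = c at *
  rw [hsl] at hpw hmem hwords hst'
  have hsrt := Srt_of_pairwise _ _ _ hpw
  obtain ⟨ws, hws, hrun⟩ := hok _ hwords
  have hz := runWords_eq c ws hrun c' (sl.map Prod.snd) (by omega) hws
  set p0 := A c' with hp0
  set pl := lst p0 sl with hpl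
  have hp0l : p0 ≤ pl := le_lst _ _ hsrt
  have hplend : ∃ j < c, pl = A j ∨ pl = B j := by
    rcases lst_mem p0 sl with h | ⟨s, hs, h⟩
    · exact ⟨c', by omega, Or.inl h⟩
    · obtain ⟨j, hj, h'⟩ := (hmem s).1 (by simp [hs])
      refine ⟨j, hj, ?_⟩
      rw [← hpl] at h
      rcases h' with rfl | rfl
      · exact Or.inl h
      · exact Or.inr h
  have hplv : pl < v := by
    obtain ⟨j, hj, h⟩ := hplend
    have := hAB j hj
    have := hBv j hj
    omega
  have hb01 : ∀ q, bitf 0 q ≤ 1 := bitf_le 0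
  -- the states
  have hmst : ∀ q x, p0 ≤ x → mst (flp c' (bitf 0)) sl q x = hst c A B q x := by
    intro q x hx
    rw [hst', mst_ge _ _ _ _ _ _ hx (hb01 q)]
  have hbefore : ∀ q x, x < p0 → hst c A B q x = bitf 0 q := by
    intro q x hx
    rw [hst', mst_lt _ _ _ _ _ _ hsrt hx (hb01 q)]
  have hafter : ∀ q x, pl ≤ x → hst c A B q x = bitf 0 q := by
    intro q x hx
    unfold hst
    rw [sum_eq_zero]
    · have := hb01 q
      omega
    · intro j hj
      rw [if_neg]
      rintro ⟨-, h⟩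
      have h2 : (B j, j) ∈ (p0, c') :: sl := (hmem _).2 ⟨j, mem_range.1 hj, Or.inr rfl⟩
      rcases List.mem_cons.1 h2 with h3 | h3
      · simp at h3
        have : B c' < v := hBv c' (by omega)
        have := hAB c' (by omega)
        obtain ⟨h3, rfl⟩ := h3
        omega
      · have := le_lst' _ _ hsrt _ h3
        dsimp at this
        omega
  let bad := finBad p0 (flp c' (bitf 0)) bad0 sl
  have hbad01 : ∀ E F, bad E F ≤ 1 := fun E F => finBad_le _ _ _ _ _ _ (updB_le _ _ _ _)
  have hbad : ∀ E F, bad E F = 0 ↔ (∀ l < 6, bitf l F ≤ bitf l E) ∧ ∀ x < v, hst c A B F x ≤ hst c A B E x := by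
    intro E F
    have h0 := finBad_eq sl p0 (flp c' (bitf 0)) bad0 E F hsrt (fun q => flp_le (hb01 q))
    rw [bad0_one] at h0
    have h1 := hbad01 E F
    have h2 : bad E F = 0 ↔ ¬ (bad E F = 1) := by omega
    rw [h2, show bad E F = 1 ↔ _ from h0]
    push Not
    constructor
    · rintro ⟨h3, h4⟩
      have h3' : ∀ l < 6, bitf l F ≤ bitf l E := by
        intro l hl
        have := h3 l hl
        have := bitf_le l F
        have := bitf_le l E
        omega
      refine ⟨h3', ?_⟩
      intro x hx
      by_cases hx1 : x < p0
      · rw [hbefore _ _ hx1, hbefore _ _ hx1]; exact h3' 0 (by norm_num)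
      by_cases hx2 : pl ≤ x
      · rw [hafter _ _ hx2, hafter _ _ hx2]; exact h3' 0 (by norm_num)
      have := h4 x (by omega) (by omega)
      rw [hmst _ _ (by omega), hmst _ _ (by omega)] at this
      have := hst_le c A B F x
      have := hst_le c A B E x
      omega
    · rintro ⟨h3, h4⟩
      constructor
      · intro l hl h5
        have := h3 l hl
        omega
      · intro x hx1 hx2
        rw [hmst _ _ (by omega), hmst _ _ (by omega)]
        have := h4 x (by omega)
        omega
  have hbits : ∀ E F, E < 2 * 2 ^ c → F < 2 * 2 ^ c → ((∀ l < 6, bitf l F ≤ bitf l E) ↔ ∀ l < c + 1, bitf l F ≤ bitf l E) := by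
    intro E F hE hF
    constructor
    · intro h l hl; exact h l (by omega)
    · intro h l hl
      by_cases h2 : l < c + 1
      · exact h l h2
      · rw [bitf_zero_of_lt (c := c + 1) (by omega) (by omega)]; exact Nat.zero_le _
  have hsumbad : ∀ E, ∑ F ∈ range (2 * 2 ^ c), bad E F + ((range (2 * 2 ^ c)).filter fun F => bad E F = 0).card = 2 * 2 ^ c := by
    intro E
    rw [card_filter, ← sum_add_distrib]
    rw [sum_congr rfl (g := fun _ => 1)]
    · simp
    · intro F _
      have := hbad01 E F
      split <;> omega
  have hb0 : 2 * 2 ^ c - 2 ≤ ∑ F ∈ range (2 * 2 ^ c), bad 0 F := by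
    have h1 := hsumbad 0
    have h2 : ((range (2 * 2 ^ c)).filter fun F => bad 0 F = 0) ⊆ {0} := by
      intro F hF
      rw [mem_filter, mem_range, hbad] at hF
      rw [mem_singleton]
      by_contra hne
      obtain ⟨l, hl⟩ := exists_bitf hne
      have hl6 : l < 6 := by
        by_contra h
        rw [bitf_zero_of_lt (c := c + 1) (by omega) (by omega)] at hl
        omega
      have := hF.2.1 l hl6
      rw [bitf_zero] at this
      omega
    have h3 := card_le_card h2
    rw [card_singleton] at h3
    omega
  have hval : ∀ E < 2 * 2 ^ c, Valid c v A B E ↔ (E ≠ 0 ∧ 2 * 2 ^ c - 2 ≤ ∑ F ∈ range (2 * 2 ^ c), bad E F) := by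
    intro E hE
    unfold Valid
    apply and_congr_right
    intro hne
    have h1 := hsumbad E
    have hsub : ({0, E} : Finset ℕ) ⊆ ((range (2 * 2 ^ c)).filter fun F => bad E F = 0) := by
      intro F hF
      rw [mem_filter, mem_range, hbad]
      rw [mem_insert, mem_singleton] at hF
      rcases hF with rfl | rfl
      · refine ⟨by omega, fun l _ => by rw [bitf_zero]; exact Nat.zero_le _, fun x _ => by rw [hst_zero]; exact Nat.zero_le _⟩
      · exact ⟨hE, fun _ _ => le_rfl, fun _ _ => le_rfl⟩
    have hcard2 : ({0, E} : Finset ℕ).card = 2 := card_pair (Ne.symm hne)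
    rw [hn]
    constructor
    · intro h
      have : ((range (2 * 2 ^ c)).filter fun F => bad E F = 0) ⊆ {0, E} := by
        intro F hF
        rw [mem_filter, mem_range, hbad] at hF
        rw [mem_insert, mem_singleton]
        exact h F hF.1 ((hbits E F hE hF.1).1 hF.2.1) hF.2.2
      have := card_le_card this
      omega
    · intro h F hF hF1 hF2
      have heq := eq_of_subset_of_card_le hsub (by omega)
      have : F ∈ ((range (2 * 2 ^ c)).filter fun F => bad E F = 0) := by
        rw [mem_filter, mem_range, hbad]
        exact ⟨hF, (hbits E F hE hF).2 hF1, hF2⟩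
      rw [← heq] at this
      simpa using this
  -- counting
  let al : ℕ → ℕ := fun q => if Valid c v A B q then 1 else 0
  have hcnt' : ∀ k, 3 ≤ k → k ≤ v → ∑ i ∈ range (2 * 2 ^ c), (if Valid c v A B i ∧ clen c v A B i = k then 1 else 0) = r := by
    intro k h1 h2
    rw [← hcnt k h1 h2, ← card_filter, ← Set.ncard_coe_finset]
    congr 1
    ext q
    simp
  have hcnt2 : ∀ s : Finset ℕ, (∀ k ∈ s, 3 ≤ k ∧ k ≤ v) →
      ∑ i ∈ range (2 * 2 ^ c), (if Valid c v A B i ∧ clen c v A B i ∈ s then 1 else 0) = r * s.card := by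
    intro s hs
    have e : r * s.card = ∑ k ∈ s, r := by simp [mul_comm]
    rw [e]
    rw [sum_congr rfl (fun k hk => (hcnt' k (hs k hk).1 (hs k hk).2).symm), sum_comm]
    apply sum_congr rfl
    intro i _
    by_cases h : Valid c v A B i <;> simp [h]
  have hal1 : ∀ i, al i = 1 ↔ Valid c v A B i := by
    intro i
    show (if Valid c v A B i then 1 else 0) = 1 ↔ _
    split <;> simp_all
  refine zdfs_sound hJ hJ2 _ (selC_eq _) (bitf 0) (fun i _ => bitf_le 0 i) (v - pl + p0 - 1) v r hv hr al (clen c v A B)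
    ?_ ?_ ?_ sl p0 c' (flp c' (bitf 0)) bad0 ts0 1 [] [] ?_ (fun i _ => flp_le (hb01 i)) (fun i _ j _ => updB_le _ _ _ _)
    hb0 ?_ ?_ ?_ rfl rfl ?_ ?_ ?_ hz
  · rw [show v - 2 = (Icc 3 v).card by simp, ← hcnt2 (Icc 3 v) (by simp)]
    apply sum_congr rfl
    intro i hi
    show (if Valid c v A B i then 1 else 0) = _
    by_cases h : Valid c v A B i
    · have := hlen i (mem_range.1 hi) h
      simp [h, this]
    · simp [h]
  · intro j hj
    rw [show j + 1 = (Icc 3 (3 + j)).card by simp; omega, ← hcnt2 (Icc 3 (3 + j)) (by simp; omega)]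
    apply sum_le_sum
    intro i hi
    split
    · rename_i h
      rw [mem_Icc] at h
      rw [if_pos ⟨(hal1 i).2 h.1, h.2.2⟩]
    · exact Nat.zero_le _
  · intro j hj
    rw [show j + 1 = (Icc (v - j) v).card by simp; omega, ← hcnt2 (Icc (v - j) v) (by simp; omega)]
    apply sum_le_sum
    intro i hi
    split
    · rename_i h
      rw [mem_Icc] at h
      rw [if_pos ⟨(hal1 i).2 h.1, by omega⟩]
    · exact Nat.zero_le _
  · refine WF_of A B c _ hc5 hAB htie sl [] p0 c' (by simpa using hpw) (by simpa using hmem) ?_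
    intro p p' h1 h2 h3 h4
    have := hgap p p' h1 h2 h3 h4 pl hplend
    omega
  · intro E hE
    show (if Valid c v A B E then 1 else 0) = _
    simp only [hval E hE]
    rfl
  · intro i _
    unfold ts0
    have := bitf_le 0 i
    have := bitf_le 1 i
    have := bitf_le 2 i
    have := bitf_le 3 i
    have := bitf_le 4 i
    have := bitf_le 5 i
    omega
  · simp
  · simp
  · have := gSum_eq sl p0 hsrt
    rw [← hpl] at this
    simp; omega
  · intro i hi
    rw [gLen_eq _ _ _ _ hsrt (flp_le (hb01 i)), ← hpl]
    rw [sum_congr rfl (fun x hx => hmst i x (mem_Ico.1 hx).1)]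
    unfold clen
    have e1 : ∑ x ∈ range v, hst c A B i x = p0 * bitf 0 i + (∑ x ∈ Ico p0 pl, hst c A B i x) + (v - pl) * bitf 0 i := by
      rw [range_eq_Ico, ← sum_Ico_consecutive _ (Nat.zero_le p0) (hp0l.trans hplv.le), ← sum_Ico_consecutive _ hp0l hplv.le]
      rw [sum_congr rfl (fun x hx => hbefore i x (mem_Ico.1 hx).2),
        sum_congr (s₁ := Ico pl v) rfl (fun x hx => hafter i x (mem_Ico.1 hx).1)]
      simp
      ring
    have e2 : (∑ j ∈ range c, bitf (j + 1) i) + bitf 0 i = ts0 i := by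
      have : ∑ j ∈ range c, bitf (j + 1) i = ∑ j ∈ range 5, bitf (j + 1) i := by
        apply sum_subset
        · intro j hj; simp at hj ⊢; omega
        · intro j _ hj
          simp at hj
          exact bitf_zero_of_lt (c := c + 1) (by omega) (by omega)
      rw [this]
      unfold ts0
      simp only [sum_range_succ, sum_range_zero]
      ring
    rw [e1, ← e2]
    simp only [dX]
    obtain ⟨y, hy⟩ : ∃ y, v - pl = y + 1 := ⟨v - pl - 1, by omega⟩
    rw [hy, show y + 1 + p0 - 1 = y + p0 by omega]
    ring

end RPan

namespace RPan
open Finset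
set_option maxRecDepth 100000
set_option maxHeartbeats 0

theorem slice1 : runSlice 1 0 945 = true := by decide +kernel
theorem slice2 : runSlice 2 0 945 = true := by decide +kernel
theorem slice3 : runSlice 3 0 945 = true := by decide +kernel
theorem slice4 : runSlice 4 0 945 = true := by decide +kernel
theorem words_len : ∀ c ≤ 5, (words c).length ≤ 945 := by decide +kernel

theorem mem_slice (c n : ℕ) (hn : 0 < n) (w : List ℕ) (hw : w ∈ words c) :
    ∃ i, n * i < (words c).length ∧ w ∈ ((words c).drop (n * i)).take n := by
  obtain ⟨k, hk, rfl⟩ := List.getElem_of_mem hw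
  refine ⟨k / n, ?_, ?_⟩
  · have := Nat.mul_div_le k n; omega
  · rw [List.mem_iff_getElem]
    have h1 := Nat.mul_div_le k n
    have h2 := Nat.div_add_mod k n
    have h3 := Nat.mod_lt k hn
    refine ⟨k % n, ?_, ?_⟩
    · simp only [List.length_take, List.length_drop]; omega
    · simp only [List.getElem_take, List.getElem_drop]
      congr 1
theorem sl5_0 : runSlice 5 (20 * 0) 20 = true := by decide +kernel
theorem sl5_1 : runSlice 5 (20 * 1) 20 = true := by decide +kernel
theorem sl5_2 : runSlice 5 (20 * 2) 20 = true := by decide +kernel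
theorem sl5_3 : runSlice 5 (20 * 3) 20 = true := by decide +kernel
theorem sl5_4 : runSlice 5 (20 * 4) 20 = true := by decide +kernel
theorem sl5_5 : runSlice 5 (20 * 5) 20 = true := by decide +kernel
theorem sl5_6 : runSlice 5 (20 * 6) 20 = true := by decide +kernel
theorem sl5_7 : runSlice 5 (20 * 7) 20 = true := by decide +kernel
theorem sl5_8 : runSlice 5 (20 * 8) 20 = true := by decide +kernel
theorem sl5_9 : runSlice 5 (20 * 9) 20 = true := by decide +kernel
theorem sl5_10 : runSlice 5 (20 * 10) 20 = true := by decide +kernel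
theorem sl5_11 : runSlice 5 (20 * 11) 20 = true := by decide +kernel
theorem sl5_12 : runSlice 5 (20 * 12) 20 = true := by decide +kernel
theorem sl5_13 : runSlice 5 (20 * 13) 20 = true := by decide +kernel
theorem sl5_14 : runSlice 5 (20 * 14) 20 = true := by decide +kernel
theorem sl5_15 : runSlice 5 (20 * 15) 20 = true := by decide +kernel
theorem sl5_16 : runSlice 5 (20 * 16) 20 = true := by decide +kernel
theorem sl5_17 : runSlice 5 (20 * 17) 20 = true := by decide +kernel
theorem sl5_18 : runSlice 5 (20 * 18) 20 = true := by decide +kernel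
theorem sl5_19 : runSlice 5 (20 * 19) 20 = true := by decide +kernel
theorem sl5_20 : runSlice 5 (20 * 20) 20 = true := by decide +kernel
theorem sl5_21 : runSlice 5 (20 * 21) 20 = true := by decide +kernel
theorem sl5_22 : runSlice 5 (20 * 22) 20 = true := by decide +kernel
theorem sl5_23 : runSlice 5 (20 * 23) 20 = true := by decide +kernel
theorem sl5_24 : runSlice 5 (20 * 24) 20 = true := by decide +kernel
theorem sl5_25 : runSlice 5 (20 * 25) 20 = true := by decide +kernel
theorem sl5_26 : runSlice 5 (20 * 26) 20 = true := by decide +kernel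
theorem sl5_27 : runSlice 5 (20 * 27) 20 = true := by decide +kernel
theorem sl5_28 : runSlice 5 (20 * 28) 20 = true := by decide +kernel
theorem sl5_29 : runSlice 5 (20 * 29) 20 = true := by decide +kernel
theorem sl5_30 : runSlice 5 (20 * 30) 20 = true := by decide +kernel
theorem sl5_31 : runSlice 5 (20 * 31) 20 = true := by decide +kernel
theorem sl5_32 : runSlice 5 (20 * 32) 20 = true := by decide +kernel
theorem sl5_33 : runSlice 5 (20 * 33) 20 = true := by decide +kernel
theorem sl5_34 : runSlice 5 (20 * 34) 20 = true := by decide +kernel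
theorem sl5_35 : runSlice 5 (20 * 35) 20 = true := by decide +kernel
theorem sl5_36 : runSlice 5 (20 * 36) 20 = true := by decide +kernel
theorem sl5_37 : runSlice 5 (20 * 37) 20 = true := by decide +kernel
theorem sl5_38 : runSlice 5 (20 * 38) 20 = true := by decide +kernel
theorem sl5_39 : runSlice 5 (20 * 39) 20 = true := by decide +kernel
theorem sl5_40 : runSlice 5 (20 * 40) 20 = true := by decide +kernel
theorem sl5_41 : runSlice 5 (20 * 41) 20 = true := by decide +kernel
theorem sl5_42 : runSlice 5 (20 * 42) 20 = true := by decide +kernel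
theorem sl5_43 : runSlice 5 (20 * 43) 20 = true := by decide +kernel
theorem sl5_44 : runSlice 5 (20 * 44) 20 = true := by decide +kernel
theorem sl5_45 : runSlice 5 (20 * 45) 20 = true := by decide +kernel
theorem sl5_46 : runSlice 5 (20 * 46) 20 = true := by decide +kernel
theorem sl5_47 : runSlice 5 (20 * 47) 20 = true := by decide +kernel

theorem hok_small (c : ℕ) (hc : c ≤ 5) (h : runSlice c 0 945 = true) :
    ∀ w ∈ words c, ∃ ws, w ∈ ws ∧ runWords c ws = true := by
  intro w hw
  refine ⟨_, ?_, h⟩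
  rw [List.drop_zero, List.take_of_length_le (words_len c hc)]
  exact hw

theorem slices5 (i : ℕ) (hi : i < 48) : runSlice 5 (20 * i) 20 = true := by
  interval_cases i
  · exact sl5_0
  · exact sl5_1
  · exact sl5_2
  · exact sl5_3
  · exact sl5_4
  · exact sl5_5
  · exact sl5_6
  · exact sl5_7
  · exact sl5_8
  · exact sl5_9
  · exact sl5_10
  · exact sl5_11
  · exact sl5_12
  · exact sl5_13
  · exact sl5_14
  · exact sl5_15
  · exact sl5_16
  · exact sl5_17
  · exact sl5_18
  · exact sl5_19
  · exact sl5_20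
  · exact sl5_21
  · exact sl5_22
  · exact sl5_23
  · exact sl5_24
  · exact sl5_25
  · exact sl5_26
  · exact sl5_27
  · exact sl5_28
  · exact sl5_29
  · exact sl5_30
  · exact sl5_31
  · exact sl5_32
  · exact sl5_33
  · exact sl5_34
  · exact sl5_35
  · exact sl5_36
  · exact sl5_37
  · exact sl5_38
  · exact sl5_39
  · exact sl5_40
  · exact sl5_41
  · exact sl5_42
  · exact sl5_43
  · exact sl5_44
  · exact sl5_45
  · exact sl5_46
  · exact sl5_47

theorem hok_all (c : ℕ) (h1 : 1 ≤ c) (h5 : c ≤ 5) :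
    ∀ w ∈ words c, ∃ ws, w ∈ ws ∧ runWords c ws = true := by
  have h : c = 1 ∨ c = 2 ∨ c = 3 ∨ c = 4 ∨ c = 5 := by omega
  rcases h with rfl | rfl | rfl | rfl | rfl
  · exact hok_small _ h5 slice1
  · exact hok_small _ h5 slice2
  · exact hok_small _ h5 slice3
  · exact hok_small _ h5 slice4
  · intro w hw
    obtain ⟨i, hi, hm⟩ := mem_slice 5 20 (by norm_num) w hw
    have := words_len 5 le_rfl
    exact ⟨_, hm, slices5 i (by omega)⟩
end RPan

namespace RPan
open Finset SimpleGraph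

variable {V : Type*} [Fintype V]

/-- all degrees even -/
def Ev (F : SimpleGraph V) : Prop := ∀ x, Even (F.neighborSet x).ncard

/-- minimal nonempty even graph -/
def MinEv (F : SimpleGraph V) : Prop := F ≠ ⊥ ∧ Ev F ∧ ∀ F' ≤ F, Ev F' → F' = ⊥ ∨ F' = F

theorem cyc_nb (k : ℕ) (hk : 3 ≤ k) (i : Fin k) : ((cycleGraph k).neighborSet i).ncard = 2 := by
  obtain ⟨n, rfl⟩ : ∃ n, k = n + 3 := ⟨k - 3, by omega⟩
  have := cycleGraph_degree_three_le (n := n) (v := i)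
  rw [← card_neighborSet_eq_degree] at this
  rw [← this, ← Nat.card_eq_fintype_card]
  rfl

theorem sub_nb {G : SimpleGraph V} (H : G.Subgraph) (k : ℕ) (hk : 3 ≤ k) (e : H.coe ≃g cycleGraph k)
    (x : V) (hx : x ∈ H.verts) : (H.neighborSet x).ncard = 2 := by
  rw [← cyc_nb k hk (e ⟨x, hx⟩)]
  rw [← Nat.card_coe_set_eq, ← Nat.card_coe_set_eq, ← Nat.card_congr (e.mapNeighborSet ⟨x, hx⟩).symm.symm]
  exact (Nat.card_congr (H.coeNeighborSetEquiv ⟨x, hx⟩)).symm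

theorem sub_nb0 {G : SimpleGraph V} (H : G.Subgraph) (x : V) (hx : x ∉ H.verts) :
    (H.neighborSet x).ncard = 0 := by
  rw [Set.ncard_eq_zero (Set.toFinite _)]
  ext y
  simp only [Subgraph.mem_neighborSet, Set.mem_empty_iff_false, iff_false]
  exact fun h => hx (H.edge_vert h)

theorem sub_verts {G : SimpleGraph V} (H : G.Subgraph) (k : ℕ) (e : H.coe ≃g cycleGraph k) :
    H.verts.ncard = k := by
  rw [← Nat.card_coe_set_eq, Nat.card_congr e.toEquiv, Nat.card_fin]

theorem sub_edges {G : SimpleGraph V} (H : G.Subgraph) (k : ℕ) (hk : 3 ≤ k) (e : H.coe ≃g cycleGraph k) :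
    H.spanningCoe.edgeSet.ncard = k := by
  classical
  have h := H.spanningCoe.sum_degrees_eq_twice_card_edges
  have h2 : ∀ x, H.spanningCoe.degree x = if x ∈ H.verts then 2 else 0 := by
    intro x
    rw [← card_neighborSet_eq_degree, ← Nat.card_eq_fintype_card, Nat.card_coe_set_eq]
    change (H.neighborSet x).ncard = _
    split_ifs with hx
    · exact sub_nb H k hk e x hx
    · exact sub_nb0 H x hx
  rw [sum_congr rfl (fun x _ => h2 x), ← sum_filter, sum_const, smul_eq_mul] at h
  have h3 : (univ.filter (fun x => x ∈ H.verts)).card = k := by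
    rw [← sub_verts H k e, ← Set.ncard_coe_finset]
    congr 1
    ext; simp
  have h4 : H.spanningCoe.edgeSet.ncard = #H.spanningCoe.edgeFinset := by
    rw [← Set.ncard_coe_finset, coe_edgeFinset]
  omega

theorem sub_minEv {G : SimpleGraph V} (H : G.Subgraph) (k : ℕ) (hk : 3 ≤ k) (e : H.coe ≃g cycleGraph k) :
    MinEv H.spanningCoe := by
  have hev : Ev H.spanningCoe := by
    intro x
    change Even (H.neighborSet x).ncard
    by_cases hx : x ∈ H.verts
    · rw [sub_nb H k hk e x hx]; exact even_two
    · rw [sub_nb0 H x hx]; exact Even.zero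
  refine ⟨?_, hev, ?_⟩
  · intro h
    have := sub_edges H k hk e
    rw [h] at this
    simp at this
    omega
  · intro F hF hFe
    by_cases h0 : F = ⊥
    · exact Or.inl h0
    refine Or.inr ?_
    have key : ∀ x y, F.Adj x y → F.neighborSet x = H.neighborSet x := by
      intro x y hxy
      have hsub : F.neighborSet x ⊆ H.neighborSet x := fun z hz => hF hz
      have hx : x ∈ H.verts := H.edge_vert (hF hxy)
      apply Set.eq_of_subset_of_ncard_le hsub _ (Set.toFinite _)
      rw [sub_nb H k hk e x hx]
      have h1 : 0 < (F.neighborSet x).ncard := (Set.ncard_pos (Set.toFinite _)).2 ⟨y, hxy⟩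
      have h2 := hFe x
      obtain ⟨m, hm⟩ := h2
      omega
    obtain ⟨a, b, hab⟩ : ∃ a b, F.Adj a b := by
      by_contra hne
      push Not at hne
      apply h0
      ext x y
      simp [hne]
    have hcon : H.coe.Preconnected := by
      rw [e.preconnected_iff]
      exact cycleGraph_preconnected
    have ha : a ∈ H.verts := H.edge_vert (hF hab)
    have hall : ∀ z : H.verts, F.neighborSet z = H.neighborSet z := by
      intro z
      obtain ⟨w⟩ := hcon ⟨a, ha⟩ z
      have : ∀ (x y : H.verts) (w : H.coe.Walk x y), F.neighborSet x = H.neighborSet x →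
          F.neighborSet y = H.neighborSet y := by
        intro x y w
        induction w with
        | nil => exact id
        | @cons x y z hxy w ih =>
          intro hx
          apply ih
          have h1 : (y : V) ∈ F.neighborSet x := by rw [hx]; exact hxy
          exact key _ _ (F.adj_symm h1)
      exact this _ _ w (key _ _ hab)
    apply le_antisymm hF
    intro x y hxy
    have := hall ⟨x, H.edge_vert hxy⟩
    have h1 : y ∈ H.neighborSet x := hxy
    rw [← this] at h1
    exact h1

theorem exists_leaf (F : SimpleGraph V) (h : F.IsAcyclic) (h0 : F ≠ ⊥) :
    ∃ x, (F.neighborSet x).ncard = 1 := by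
  classical
  obtain ⟨a, b, hab⟩ : ∃ a b, F.Adj a b := by
    by_contra hne
    push Not at hne
    apply h0
    ext x y
    simp [hne]
  let C := F.connectedComponentMk a
  have hT := h.isTree_connectedComponent C
  have hbC : b ∈ C := (ConnectedComponent.mem_supp_iff C b).2 (ConnectedComponent.eq.2 hab.symm.reachable)
  have haC : a ∈ C := (ConnectedComponent.mem_supp_iff C a).2 rfl
  haveI : Nontrivial C := ⟨⟨a, haC⟩, ⟨b, hbC⟩, fun h => hab.ne (congrArg Subtype.val h)⟩
  obtain ⟨⟨x, hx⟩, hx1⟩ := hT.exists_vert_degree_one_of_nontrivial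
  refine ⟨x, ?_⟩
  rw [← card_neighborSet_eq_degree, ← Nat.card_eq_fintype_card, Nat.card_coe_set_eq] at hx1
  rw [← hx1, ← Set.ncard_image_of_injective _ Subtype.val_injective]
  congr 1
  ext y
  simp only [Set.mem_image, mem_neighborSet, Subtype.exists, exists_and_right, exists_eq_right]
  constructor
  · intro hy
    have : y ∈ C := by
      refine (ConnectedComponent.mem_supp_iff C y).2 ?_
      rw [← (ConnectedComponent.mem_supp_iff C x).1 hx]
      exact ConnectedComponent.eq.2 hy.symm.reachable
    exact ⟨this, hy⟩
  · rintro ⟨_, hy⟩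
    exact hy

theorem exists_sub {G : SimpleGraph V} (F : SimpleGraph V) (hFG : F ≤ G) (hF : MinEv F) :
    ∃ (k : ℕ) (_ : 3 ≤ k) (H : G.Subgraph), Nonempty (H.coe ≃g cycleGraph k) ∧ H.spanningCoe = F := by
  have hna : ¬ F.IsAcyclic := by
    intro h
    obtain ⟨x, hx⟩ := exists_leaf F h hF.1
    have := hF.2.1 x
    rw [hx] at this
    exact absurd this (by decide)
  rw [isAcyclic_iff_free_cycleGraph] at hna
  push Not at hna
  obtain ⟨k, hk, hfree⟩ := hna
  obtain ⟨f⟩ := hfree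
  let g : Copy (cycleGraph k) G := (Copy.ofLE F G hFG).comp f
  refine ⟨k, hk, g.toSubgraph, ⟨g.isoToSubgraph.symm⟩, ?_⟩
  have hm := sub_minEv g.toSubgraph k hk g.isoToSubgraph.symm
  have hle : g.toSubgraph.spanningCoe ≤ F := by
    intro x y hxy
    change (g.toSubgraph).Adj x y at hxy
    rw [Copy.toSubgraph, Subgraph.map_adj] at hxy
    obtain ⟨a, b, hab, rfl, rfl⟩ := hxy
    exact f.toHom.map_adj hab
  exact (hF.2.2 _ hle hm.2.1).resolve_left hm.1

theorem cycleCount_eq (G : SimpleGraph V) (k : ℕ) (hk : 3 ≤ k) :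
    cycleCount G k = {F : SimpleGraph V | F ≤ G ∧ MinEv F ∧ F.edgeSet.ncard = k}.ncard := by
  unfold cycleCount
  refine Set.ncard_congr (fun H _ => H.spanningCoe) ?_ ?_ ?_
  · rintro H ⟨e⟩
    exact ⟨H.spanningCoe_le, sub_minEv H k hk e, sub_edges H k hk e⟩
  · rintro H H' ⟨e⟩ ⟨e'⟩ h
    have hadj : H.Adj = H'.Adj := Subgraph.spanningCoe_inj.1 h
    refine Subgraph.ext ?_ hadj
    have hv : ∀ (K : G.Subgraph) (e : K.coe ≃g cycleGraph k) (x : V), x ∈ K.verts ↔ ∃ y, K.Adj x y := by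
      intro K e x
      constructor
      · intro hx
        have h2 := sub_nb K k hk e x hx
        have : (K.neighborSet x).Nonempty := (Set.ncard_pos (Set.toFinite _)).1 (by omega)
        exact this
      · rintro ⟨y, hy⟩
        exact K.edge_vert hy
    ext x
    rw [hv H e, hv H' e', hadj]
  · rintro F ⟨hFG, hF, hc⟩
    obtain ⟨k', hk', H, ⟨e⟩, rfl⟩ := exists_sub F hFG hF
    have := sub_edges H k' hk' e
    obtain rfl : k' = k := by omega
    exact ⟨H, ⟨e⟩, rfl⟩

theorem minEv_bounds (G F : SimpleGraph V) (hFG : F ≤ G) (hF : MinEv F) :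
    3 ≤ F.edgeSet.ncard ∧ F.edgeSet.ncard ≤ Fintype.card V := by
  obtain ⟨k', hk', H, ⟨e⟩, rfl⟩ := exists_sub F hFG hF
  rw [sub_edges H k' hk' e]
  refine ⟨hk', ?_⟩
  rw [← sub_verts H k' e, ← Nat.card_eq_fintype_card, ← Set.ncard_univ]
  exact Set.ncard_le_ncard (Set.subset_univ _) (Set.toFinite _)

end RPan

namespace RPan
open Finset SimpleGraph

variable {V : Type*} [Fintype V]

/-- `f` enumerates a Hamiltonian cycle periodically -/
structure Ham (G : SimpleGraph V) (v : ℕ) (f : ℕ → V) : Prop where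
  per : ∀ x, f (x + v) = f x
  inj : ∀ x y, x < v → y < v → f x = f y → x = y
  surj : ∀ w, ∃ x < v, f x = w
  adj : ∀ x, G.Adj (f x) (f (x + 1))

theorem exists_ham (G : SimpleGraph V) (hv : 3 ≤ Fintype.card V) (h : 0 < cycleCount G (Fintype.card V)) :
    ∃ f, Ham G (Fintype.card V) f := by
  obtain ⟨v, hvd⟩ : ∃ v, v = Fintype.card V := ⟨_, rfl⟩
  rw [← hvd] at h hv ⊢
  unfold cycleCount at h
  have hne : {H : G.Subgraph | Nonempty (H.coe ≃g cycleGraph v)}.Nonempty := by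
    by_contra hc
    rw [Set.not_nonempty_iff_eq_empty] at hc
    rw [hc] at h; simp at h
  obtain ⟨H, ⟨e⟩⟩ := hne
  have hu : H.verts = Set.univ := by
    apply Set.eq_of_subset_of_ncard_le (Set.subset_univ _) _ (Set.toFinite _)
    rw [sub_verts H v e, Set.ncard_univ, Nat.card_eq_fintype_card, hvd]
  have hv0 : 0 < v := by omega
  refine ⟨fun x => (e.symm ⟨x % v, Nat.mod_lt _ hv0⟩ : V), ?_, ?_, ?_, ?_⟩
  · intro x
    simp
  · intro x y hx hy hxy
    have := e.symm.injective (Subtype.val_injective hxy)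
    rw [Fin.mk.injEq, Nat.mod_eq_of_lt hx, Nat.mod_eq_of_lt hy] at this
    exact this
  · intro w
    have hw : w ∈ H.verts := by rw [hu]; trivial
    refine ⟨(e ⟨w, hw⟩).val, (e ⟨w, hw⟩).isLt, ?_⟩
    have : (⟨(e ⟨w, hw⟩).val % v, Nat.mod_lt _ hv0⟩ : Fin v) = e ⟨w, hw⟩ :=
      Fin.ext (Nat.mod_eq_of_lt (e ⟨w, hw⟩).isLt)
    simp only [this]
    simp
  · intro x
    apply H.adj_sub
    have : H.coe.Adj (e.symm ⟨x % v, Nat.mod_lt _ hv0⟩) (e.symm ⟨(x + 1) % v, Nat.mod_lt _ hv0⟩) := by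
      rw [e.symm.map_adj_iff, cycleGraph_adj']
      right
      rw [Fin.sub_def]
      simp only
      rw [Nat.add_mod x 1 v, Nat.mod_eq_of_lt (show 1 < v by omega)]
      have h1 := Nat.mod_lt x hv0
      by_cases h2 : x % v + 1 = v
      · rw [h2, Nat.mod_self, Nat.add_zero, Nat.mod_eq_of_lt (by omega)]; omega
      · rw [Nat.mod_eq_of_lt (show x % v + 1 < v by omega)]
        have : v - x % v + (x % v + 1) = 1 + v := by omega
        rw [this, Nat.add_mod_right, Nat.mod_eq_of_lt (by omega)]
    exact this

theorem Ham.per_mul {G : SimpleGraph V} {v : ℕ} {f : ℕ → V} (h : Ham G v f) (x k : ℕ) : f (x + v * k) = f x := by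
  induction k with
  | zero => rfl
  | succ k ih => rw [Nat.mul_succ, ← add_assoc, h.per, ih]

theorem Ham.mod {G : SimpleGraph V} {v : ℕ} {f : ℕ → V} (h : Ham G v f) (x : ℕ) : f (x % v) = f x := by
  conv_rhs => rw [← Nat.mod_add_div x v]
  rw [h.per_mul]

theorem Ham.rot {G : SimpleGraph V} {v : ℕ} {f : ℕ → V} (h : Ham G v f) (s : ℕ) (hs : s < v) :
    Ham G v (fun x => f (x + s)) where
  per x := by
    have : x + v + s = x + s + v := by omega
    simp only [this, h.per]
  inj x y hx hy hxy := by

    rw [← h.mod (x + s), ← h.mod (y + s)] at hxy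
    have h1 := h.inj _ _ (Nat.mod_lt _ (by omega)) (Nat.mod_lt _ (by omega)) hxy
    have h2 : x + s ≡ y + s [MOD v] := h1
    have h3 := Nat.ModEq.add_right_cancel' s h2
    have h4 : x % v = y % v := h3
    rwa [Nat.mod_eq_of_lt hx, Nat.mod_eq_of_lt hy] at h4
  surj w := by
    obtain ⟨x, hx, rfl⟩ := h.surj w
    refine ⟨(x + (v - s)) % v, Nat.mod_lt _ (by omega), ?_⟩

    rw [← h.mod, Nat.mod_add_mod, h.mod]
    have : x + (v - s) + s = x + v := by omega
    rw [this, h.per]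
  adj x := by
    have : x + 1 + s = x + s + 1 := by omega
    simp only [this]
    exact h.adj _

def NC (f : ℕ → V) (u w : V) : Prop := ∀ x, ¬ (f x = u ∧ f (x + 1) = w) ∧ ¬ (f x = w ∧ f (x + 1) = u)

def EndV (G : SimpleGraph V) (f : ℕ → V) (u : V) : Prop := ∃ w, G.Adj u w ∧ NC f u w

theorem EndV_rot {G : SimpleGraph V} {v : ℕ} {f : ℕ → V} (h : Ham G v f) (s : ℕ) (hs : s < v) (u : V)
    (hu : EndV G (fun x => f (x + s)) u) : EndV G f u := by
  obtain ⟨w, h1, h2⟩ := hu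
  refine ⟨w, h1, fun x => ?_⟩
  have h3 := h2 (x + (v - s))
  simp only at h3
  have e1 : x + (v - s) + s = x + v := by omega
  have e2 : x + (v - s) + 1 + s = x + 1 + v := by omega
  rw [e1, e2, h.per, h.per] at h3
  exact h3

theorem exists_good (G : SimpleGraph V) (v : ℕ) (hv : 0 < v) (h : ∃ f, Ham G v f) :
    ∃ f, Ham G v f ∧ ∀ p p', p' < v → EndV G f (f p) → EndV G f (f p') → p < p' →
      (∀ x, x < v → EndV G f (f x) → x ≤ p ∨ p' ≤ x) → ∀ x, x < v → EndV G f (f x) → p' - p + x ≤ v := by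
  classical
  have hex : ∃ m, ∃ f, Ham G v f ∧ ∀ x, x < v → EndV G f (f x) → x ≤ m := by
    obtain ⟨f, hf⟩ := h
    exact ⟨v, f, hf, fun x hx _ => hx.le⟩
  obtain ⟨f, hf, hm⟩ := Nat.find_spec hex
  refine ⟨f, hf, fun p p' hp'v hp hp' hpp' hgap x hx hxe => ?_⟩
  by_contra hcon
  have hxm := hm x hx hxe
  have hp'm := hm p' hp'v hp'
  refine Nat.find_min hex (m := Nat.find hex - 1) (by omega) ⟨fun y => f (y + p'), hf.rot p' hp'v, ?_⟩
  intro y hy hye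
  have hye2 : EndV G f (f (y + p')) := EndV_rot hf p' hp'v _ hye
  by_cases hlt : y + p' < v
  · have := hm _ hlt hye2
    omega
  · have e : y + p' = (y + p' - v) + v := by omega
    rw [e, hf.per] at hye2
    have := hgap _ (by omega) hye2
    omega

theorem NC_iff {G : SimpleGraph V} {v : ℕ} {f : ℕ → V} (h : Ham G v f) (hv : 3 ≤ v) (x y : ℕ) (hxy : x < y) (hy : y < v) :
    NC f (f x) (f y) ↔ y ≠ x + 1 ∧ ¬ (x = 0 ∧ y + 1 = v) := by
  constructor
  · intro hn
    refine ⟨fun e => (hn x).1 ⟨rfl, by rw [e]⟩, ?_⟩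
    rintro ⟨rfl, e⟩
    refine (hn y).2 ⟨rfl, ?_⟩
    have := h.per 0
    rw [zero_add] at this
    rw [e, this]
  · rintro ⟨h1, h2⟩
    have key : ∀ z, ∃ a b, a < v ∧ b < v ∧ f z = f a ∧ f (z + 1) = f b ∧ (b = a + 1 ∨ (b = 0 ∧ a + 1 = v)) := by
      intro z
      have hz := Nat.mod_lt z (show v > 0 by omega)
      have e1 : f z = f (z % v) := (h.mod z).symm
      have e2 : f (z + 1) = f (z % v + 1) := by rw [← h.mod (z + 1), ← Nat.mod_add_mod, h.mod]
      by_cases hc : z % v + 1 = v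
      · refine ⟨z % v, 0, hz, by omega, e1, ?_, Or.inr ⟨rfl, hc⟩⟩
        rw [e2, hc]
        have := h.per 0
        rwa [zero_add] at this
      · exact ⟨z % v, z % v + 1, hz, by omega, e1, e2, Or.inl rfl⟩
    intro z
    obtain ⟨a, b, ha, hb, e1, e2, hab⟩ := key z
    rw [e1, e2]
    constructor
    · rintro ⟨g1, g2⟩
      have := h.inj _ _ ha (by omega) g1
      have := h.inj _ _ hb (by omega) g2
      omega
    · rintro ⟨g1, g2⟩
      have := h.inj _ _ ha (by omega) g1
      have := h.inj _ _ hb (by omega) g2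
      omega

theorem NC_symm {f : ℕ → V} {u w : V} (h : NC f u w) : NC f w u := fun x => ⟨(h x).2, (h x).1⟩

theorem sorted_enum (S : Finset ℕ) : ∃ g : ℕ → ℕ, (∀ i j, i < j → j < S.card → g j < g i) ∧
    ∀ z, z ∈ S ↔ ∃ j < S.card, g j = z := by
  let em := S.orderEmbOfFin (rfl : S.card = S.card)
  refine ⟨fun j => if h : j < S.card then em (Fin.rev ⟨j, h⟩) else 0, ?_, ?_⟩
  · intro i j hij hj
    have hi : i < S.card := by omega
    simp only [hi, hj, dif_pos]
    apply em.strictMono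
    rw [Fin.rev_lt_rev]
    exact hij
  · intro z
    have hr : z ∈ Set.range em ↔ z ∈ S := by
      rw [Finset.range_orderEmbOfFin]; rfl
    rw [← hr]
    constructor
    · rintro ⟨i, rfl⟩
      refine ⟨(Fin.rev i).val, (Fin.rev i).isLt, ?_⟩
      simp only [(Fin.rev i).isLt, dif_pos, Fin.eta, Fin.rev_rev]
    · rintro ⟨j, hj, rfl⟩
      simp only [hj, dif_pos]
      exact ⟨_, rfl⟩

/-- labelled chords -/
structure Lab (G : SimpleGraph V) (v : ℕ) (f : ℕ → V) (c : ℕ) (A B : ℕ → ℕ) : Prop where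
  v3 : 3 ≤ v
  ham : Ham G v f
  lt : ∀ j < c, A j < B j
  bd : ∀ j < c, B j < v
  anti : ∀ i j, i < j → j < c → A j ≤ A i
  tie : ∀ i j, i < j → j < c → A j = A i → B j < B i
  nc : ∀ j < c, B j ≠ A j + 1 ∧ ¬ (A j = 0 ∧ B j + 1 = v)
  edge : ∀ x y, x < y → y < v → (G.Adj (f x) (f y) ↔ (y = x + 1 ∨ (x = 0 ∧ y + 1 = v) ∨ ∃ j < c, A j = x ∧ B j = y))

theorem exists_lab (G : SimpleGraph V) (v : ℕ) (hv : 3 ≤ v) (f : ℕ → V) (h : Ham G v f) :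
    ∃ c A B, Lab G v f c A B := by
  classical
  let S := (range (v * v)).filter (fun z => z / v < z % v ∧ G.Adj (f (z / v)) (f (z % v)) ∧
    z % v ≠ z / v + 1 ∧ ¬ (z / v = 0 ∧ z % v + 1 = v))
  obtain ⟨g, hg, hS⟩ := sorted_enum S
  have hmem : ∀ j < S.card, g j / v < g j % v ∧ G.Adj (f (g j / v)) (f (g j % v)) ∧
      g j % v ≠ g j / v + 1 ∧ ¬ (g j / v = 0 ∧ g j % v + 1 = v) := by
    intro j hj
    have := (hS (g j)).2 ⟨j, hj, rfl⟩
    exact (mem_filter.1 this).2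
  refine ⟨S.card, fun j => g j / v, fun j => g j % v, hv, h, fun j hj => (hmem j hj).1,
    fun j hj => Nat.mod_lt _ (by omega), ?_, ?_, fun j hj => (hmem j hj).2.2, ?_⟩
  · intro i j hij hj
    exact Nat.div_le_div_right (hg i j hij hj).le
  · intro i j hij hj he
    have h1 := hg i j hij hj
    have h2 := Nat.div_add_mod (g i) v
    have h3 := Nat.div_add_mod (g j) v

    rw [he] at h3
    omega
  · intro x y hxy hy
    constructor
    · intro hadj
      by_cases c1 : y = x + 1
      · exact Or.inl c1
      by_cases c2 : x = 0 ∧ y + 1 = v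
      · exact Or.inr (Or.inl c2)
      refine Or.inr (Or.inr ?_)
      have e1 : (x * v + y) / v = x := by
        rw [mul_comm, Nat.mul_add_div (by omega), Nat.div_eq_of_lt hy, add_zero]
      have e2 : (x * v + y) % v = y := by
        rw [mul_comm, Nat.mul_add_mod, Nat.mod_eq_of_lt hy]
      have : x * v + y ∈ S := by
        refine mem_filter.2 ⟨mem_range.2 ?_, ?_⟩
        · nlinarith
        · rw [e1, e2]; exact ⟨hxy, hadj, c1, c2⟩
      obtain ⟨j, hj, hz⟩ := (hS _).1 this
      exact ⟨j, hj, by simp only [hz, e1], by simp only [hz, e2]⟩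
    · rintro (rfl | ⟨rfl, e⟩ | ⟨j, hj, rfl, rfl⟩)
      · exact h.adj x
      · have := h.adj y
        have h0 := h.per 0
        rw [zero_add] at h0
        rw [e, h0] at this
        exact this.symm
      · exact (hmem j hj).2.1

theorem Lab.endV {G : SimpleGraph V} {v : ℕ} {f : ℕ → V} {c : ℕ} {A B : ℕ → ℕ} (L : Lab G v f c A B)
    (x : ℕ) (hx : x < v) : EndV G f (f x) ↔ ∃ j < c, x = A j ∨ x = B j := by
  constructor
  · rintro ⟨w, h1, h2⟩
    obtain ⟨y, hy, rfl⟩ := L.ham.surj w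
    rcases lt_trichotomy x y with h | h | h
    · have h3 := (NC_iff L.ham L.v3 x y h hy).1 h2
      rcases (L.edge x y h hy).1 h1 with g | g | ⟨j, hj, g1, g2⟩
      · exact absurd g h3.1
      · exact absurd g h3.2
      · exact ⟨j, hj, Or.inl g1.symm⟩
    · subst h
      exact absurd h1 (G.loopless.irrefl _)
    · have h3 := (NC_iff L.ham L.v3 y x h hx).1 (NC_symm h2)
      rcases (L.edge y x h hx).1 h1.symm with g | g | ⟨j, hj, g1, g2⟩
      · exact absurd g h3.1
      · exact absurd g h3.2
      · exact ⟨j, hj, Or.inr g2.symm⟩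
  · rintro ⟨j, hj, h⟩
    have h1 := L.lt j hj
    have h2 := L.bd j hj
    have h3 := (NC_iff L.ham L.v3 _ _ h1 h2).2 (L.nc j hj)
    have h4 := (L.edge _ _ h1 h2).2 (Or.inr (Or.inr ⟨j, hj, rfl, rfl⟩))
    rcases h with rfl | rfl
    · exact ⟨_, h4, h3⟩
    · exact ⟨_, h4.symm, NC_symm h3⟩

end RPan

namespace RPan
open Finset SimpleGraph

theorem bitf_succ (l q : ℕ) : bitf (l + 1) q = bitf l (q / 2) := by
  show q / 2 ^ (l + 1) % 2 = q / 2 / 2 ^ l % 2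
  rw [Nat.div_div_eq_div_mul, pow_succ, mul_comm]

theorem bitf_low (q : ℕ) : bitf 0 q = q % 2 := by
  show q / 2 ^ 0 % 2 = q % 2
  simp

theorem exists_bits : ∀ (n : ℕ) (β : ℕ → ℕ), (∀ l < n, β l ≤ 1) → ∃ q < 2 ^ n, ∀ l < n, bitf l q = β l
  | 0, β, _ => ⟨0, by norm_num, fun l hl => absurd hl (by omega)⟩
  | n + 1, β, h => by
    obtain ⟨q, hq, hb⟩ := exists_bits n (fun l => β (l + 1)) (fun l hl => h _ (by omega))
    have h0 := h 0 (by omega)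
    refine ⟨2 * q + β 0, by rw [pow_succ]; omega, ?_⟩
    intro l hl
    cases l with
    | zero => rw [bitf_low]; omega
    | succ l =>
      rw [bitf_succ, show (2 * q + β 0) / 2 = q by omega]
      exact hb l (by omega)

theorem bits_inj : ∀ (n q q' : ℕ), q < 2 ^ n → q' < 2 ^ n → (∀ l < n, bitf l q = bitf l q') → q = q'
  | 0, q, q', h, h', _ => by simp at h h'; omega
  | n + 1, q, q', h, h', hb => by
    have h0 := hb 0 (by omega)
    rw [bitf_low, bitf_low] at h0
    rw [pow_succ] at h h'
    have := bits_inj n (q / 2) (q' / 2) (by omega) (by omega) (fun l hl => by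
      rw [← bitf_succ, ← bitf_succ]; exact hb _ (by omega))
    omega

def csum (c : ℕ) (A B β : ℕ → ℕ) (x : ℕ) : ℕ :=
  ∑ j ∈ range c, ((if A j = x then β j else 0) + (if B j = x then β j else 0))

def spsum (c : ℕ) (A B β : ℕ → ℕ) (x : ℕ) : ℕ :=
  ∑ j ∈ range c, if A j ≤ x ∧ x < B j then β j else 0

theorem spsum_succ (c : ℕ) (A B β : ℕ → ℕ) (h : ∀ j < c, A j < B j) (x : ℕ) :
    spsum c A B β (x + 1) % 2 = (spsum c A B β x + csum c A B β (x + 1)) % 2 := by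
  unfold spsum csum
  induction c with
  | zero => rfl
  | succ c ih =>
    have ih := ih (fun j hj => h j (by omega))
    have hc := h c (by omega)
    rw [sum_range_succ, sum_range_succ, sum_range_succ]
    split_ifs <;> omega

theorem spsum_zero (c : ℕ) (A B β : ℕ → ℕ) (h : ∀ j < c, A j < B j) :
    spsum c A B β 0 = csum c A B β 0 := by
  unfold spsum csum
  apply sum_congr rfl
  intro j hj
  have := h j (mem_range.1 hj)
  split_ifs <;> omega

theorem spsum_last (c : ℕ) (A B β : ℕ → ℕ) (x : ℕ) (h : ∀ j < c, B j ≤ x) : spsum c A B β x = 0 := by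
  unfold spsum
  apply sum_eq_zero
  intro j hj
  have := h j (mem_range.1 hj)
  rw [if_neg (by omega)]

def prv (v x : ℕ) : ℕ := if x = 0 then v - 1 else x - 1

/-- evenness of an indicator function -/
def EvX (v c : ℕ) (A B χ : ℕ → ℕ) : Prop :=
  ∀ x < v, (χ x + χ (prv v x) + csum c A B (fun j => χ (v + j)) x) % 2 = 0

/-- indicator of candidate q -/
def chi (c v : ℕ) (A B : ℕ → ℕ) (q i : ℕ) : ℕ := if i < v then hst c A B q i else bitf (i - v + 1) q

theorem hst_def (c : ℕ) (A B : ℕ → ℕ) (q x : ℕ) :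
    hst c A B q x = (bitf 0 q + spsum c A B (fun j => bitf (j + 1) q) x) % 2 := rfl

theorem hst_last (c v : ℕ) (A B : ℕ → ℕ) (hv : 0 < v) (hB : ∀ j < c, B j < v) (q : ℕ) :
    hst c A B q (v - 1) = bitf 0 q := by
  rw [hst_def, spsum_last _ _ _ _ _ (fun j hj => by have := hB j hj; omega)]
  have := bitf_le 0 q
  omega

theorem chi_le (c v : ℕ) (A B : ℕ → ℕ) (q i : ℕ) : chi c v A B q i ≤ 1 := by
  unfold chi
  split_ifs
  · exact hst_le _ _ _ _ _
  · exact bitf_le _ _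

theorem EvX_chi (c v : ℕ) (A B : ℕ → ℕ) (hv : 0 < v) (hAB : ∀ j < c, A j < B j) (hB : ∀ j < c, B j < v) (q : ℕ) :
    EvX v c A B (chi c v A B q) := by
  intro x hx
  have e : csum c A B (fun j => chi c v A B q (v + j)) x = csum c A B (fun j => bitf (j + 1) q) x := by
    unfold chi
    simp
  rw [e]
  have h1 : chi c v A B q x = hst c A B q x := by unfold chi; rw [if_pos hx]
  have h2 : chi c v A B q (prv v x) = hst c A B q (prv v x) := by
    unfold chi; rw [if_pos]; unfold prv; split_ifs <;> omega
  rw [h1, h2]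
  cases x with
  | zero =>
    rw [show prv v 0 = v - 1 from rfl, hst_last c v A B hv hB, hst_def, spsum_zero c A B _ hAB]
    omega
  | succ x =>
    have : prv v (x + 1) = x := rfl
    rw [this, hst_def, hst_def]
    have := spsum_succ c A B (fun j => bitf (j + 1) q) hAB x
    omega

theorem chi_of_EvX (c v : ℕ) (A B χ : ℕ → ℕ) (hv : 0 < v) (hAB : ∀ j < c, A j < B j) (hB : ∀ j < c, B j < v)
    (hχ : ∀ i < v + c, χ i ≤ 1) (he : EvX v c A B χ) :
    ∃ q < 2 ^ (c + 1), ∀ i < v + c, chi c v A B q i = χ i := by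
  obtain ⟨q, hq, hb⟩ := exists_bits (c + 1) (fun l => χ (v - 1 + l)) (fun l hl => hχ _ (by omega))
  refine ⟨q, hq, ?_⟩
  have hb0 : bitf 0 q = χ (v - 1) := hb 0 (by omega)
  have hbs : ∀ j < c, bitf (j + 1) q = χ (v + j) := by
    intro j hj
    rw [hb (j + 1) (by omega)]
    congr 1
    omega
  have hcs : ∀ x, csum c A B (fun j => bitf (j + 1) q) x = csum c A B (fun j => χ (v + j)) x := by
    intro x
    unfold csum
    apply sum_congr rfl
    intro j hj
    simp only [hbs j (mem_range.1 hj)]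
  have hmain : ∀ x < v, hst c A B q x = χ x := by
    intro x
    induction x with
    | zero =>
      intro hx
      have h1 := he 0 hx
      rw [show prv v 0 = v - 1 from rfl] at h1
      have h2 := hχ 0 (by omega)
      rw [hst_def, spsum_zero c A B _ hAB, hcs, hb0]
      omega
    | succ x ih =>
      intro hx
      have ih := ih (by omega)
      have h1 := he (x + 1) hx
      rw [show prv v (x + 1) = x from rfl] at h1
      have h2 := hχ (x + 1) (by omega)
      have h3 := spsum_succ c A B (fun j => bitf (j + 1) q) hAB x
      rw [hcs] at h3
      rw [hst_def] at ih ⊢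
      omega
  intro i hi
  unfold chi
  split_ifs with h
  · exact hmain i h
  · rw [hbs _ (by omega)]
    congr 1
    omega

/-- lower and upper end of edge i -/
def lo (v : ℕ) (A : ℕ → ℕ) (i : ℕ) : ℕ := if i < v then (if i + 1 = v then 0 else i) else A (i - v)
def hi (v : ℕ) (B : ℕ → ℕ) (i : ℕ) : ℕ := if i < v then (if i + 1 = v then i else i + 1) else B (i - v)

variable {V : Type*} [Fintype V]

def ed (v : ℕ) (f : ℕ → V) (A B : ℕ → ℕ) (i : ℕ) : Sym2 V := s(f (lo v A i), f (hi v B i))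

open Classical in
/-- indicator of a proposition -/
noncomputable def bi (p : Prop) : ℕ := if p then 1 else 0

theorem bi_pos {p : Prop} (h : p) : bi p = 1 := if_pos h
theorem bi_neg {p : Prop} (h : ¬ p) : bi p = 0 := if_neg h
theorem bi_le (p : Prop) : bi p ≤ 1 := by unfold bi; split_ifs <;> omega

theorem inc_card (F : SimpleGraph V) (x : V) : (F.neighborSet x).ncard = {z | z ∈ F.edgeSet ∧ x ∈ z}.ncard := by
  classical
  have h := F.card_incidenceSet_eq_degree x
  rw [← card_neighborSet_eq_degree, ← Nat.card_eq_fintype_card, ← Nat.card_eq_fintype_card,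
    Nat.card_coe_set_eq, Nat.card_coe_set_eq] at h
  exact h.symm

theorem EvX_congr {v c : ℕ} {A B χ χ' : ℕ → ℕ} (h : ∀ i < v + c, χ i = χ' i) (h1 : EvX v c A B χ) : EvX v c A B χ' := by
  intro x hx
  have h2 := h1 x hx
  have hp : prv v x < v := by unfold prv; split_ifs <;> omega
  rw [h x (by omega), h _ (by omega)] at h2
  have : csum c A B (fun j => χ (v + j)) x = csum c A B (fun j => χ' (v + j)) x := by
    unfold csum
    apply sum_congr rfl
    intro j hj
    simp only [h (v + j) (by have := mem_range.1 hj; omega)]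
  rw [this] at h2
  exact h2

section
variable {G : SimpleGraph V} {v : ℕ} {f : ℕ → V} {c : ℕ} {A B : ℕ → ℕ} (L : Lab G v f c A B)
include L

theorem lo_lt (i : ℕ) (h : i < v + c) : lo v A i < hi v B i ∧ hi v B i < v := by
  have := L.v3
  unfold lo hi
  split_ifs with h1 h2
  · omega
  · omega
  · exact ⟨L.lt _ (by omega), L.bd _ (by omega)⟩

theorem lohi_inj (i i' : ℕ) (h : i < v + c) (h' : i' < v + c) (h1 : lo v A i = lo v A i') (h2 : hi v B i = hi v B i') :
    i = i' := by
  have hv := L.v3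
  unfold lo at h1
  unfold hi at h2
  by_cases c1 : i < v <;> by_cases c2 : i' < v
  · simp only [c1, c2, if_true] at h1 h2
    split_ifs at h1 h2 <;> omega
  · simp only [c1, c2, if_true, if_false] at h1 h2
    have := L.nc (i' - v) (by omega)
    split_ifs at h1 h2 <;> omega
  · simp only [c1, c2, if_true, if_false] at h1 h2
    have := L.nc (i - v) (by omega)
    split_ifs at h1 h2 <;> omega
  · simp only [c1, c2, if_false] at h1 h2
    rcases lt_trichotomy (i - v) (i' - v) with h3 | h3 | h3
    · have := L.tie _ _ h3 (by omega) h1.symm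
      omega
    · omega
    · have := L.tie _ _ h3 (by omega) h1
      omega

theorem mem_ed (i x : ℕ) (h : i < v + c) (hx : x < v) : f x ∈ ed v f A B i ↔ lo v A i = x ∨ hi v B i = x := by
  have h1 := lo_lt L i h
  unfold ed
  rw [Sym2.mem_iff]
  constructor
  · rintro (e | e)
    · exact Or.inl (L.ham.inj _ _ hx (by omega) e).symm
    · exact Or.inr (L.ham.inj _ _ hx (by omega) e).symm
  · rintro (e | e)
    · left; rw [e]
    · right; rw [e]

theorem ed_inj (i i' : ℕ) (h : i < v + c) (h' : i' < v + c) (he : ed v f A B i = ed v f A B i') : i = i' := by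
  have h1 := lo_lt L i h
  have h2 := lo_lt L i' h'
  unfold ed at he
  rw [Sym2.eq_iff] at he
  rcases he with ⟨e1, e2⟩ | ⟨e1, e2⟩
  · exact lohi_inj L i i' h h' (L.ham.inj _ _ (by omega) (by omega) e1) (L.ham.inj _ _ (by omega) (by omega) e2)
  · have := L.ham.inj _ _ (by omega) (by omega) e1
    have := L.ham.inj _ _ (by omega) (by omega) e2
    omega

theorem ed_mem (i : ℕ) (h : i < v + c) : ed v f A B i ∈ G.edgeSet := by
  have hv := L.v3
  have h1 := lo_lt L i h
  unfold ed
  rw [mem_edgeSet, L.edge _ _ h1.1 h1.2]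
  unfold lo hi
  split_ifs with h2 h3
  · exact Or.inr (Or.inl ⟨rfl, h3⟩)
  · exact Or.inl rfl
  · exact Or.inr (Or.inr ⟨i - v, by omega, rfl, rfl⟩)

theorem ed_surj (z : Sym2 V) (hz : z ∈ G.edgeSet) : ∃ i < v + c, ed v f A B i = z := by
  have hv := L.v3
  have key : ∀ x y, x < y → y < v → G.Adj (f x) (f y) → ∃ i < v + c, lo v A i = x ∧ hi v B i = y := by
    intro x y hxy hy hadj
    rcases (L.edge x y hxy hy).1 hadj with h | h | ⟨j, hj, h1, h2⟩
    · refine ⟨x, by omega, ?_, ?_⟩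
      · unfold lo; rw [if_pos (by omega), if_neg (by omega)]
      · unfold hi; rw [if_pos (by omega), if_neg (by omega)]; omega
    · refine ⟨y, by omega, ?_, ?_⟩
      · unfold lo; rw [if_pos (by omega), if_pos (by omega)]; omega
      · unfold hi; rw [if_pos (by omega), if_pos (by omega)]
    · refine ⟨v + j, by omega, ?_, ?_⟩
      · unfold lo; rw [if_neg (by omega), Nat.add_sub_cancel_left]; exact h1
      · unfold hi; rw [if_neg (by omega), Nat.add_sub_cancel_left]; exact h2
  induction z using Sym2.ind with
  | _ a b =>
    rw [mem_edgeSet] at hz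
    obtain ⟨x, hx, rfl⟩ := L.ham.surj a
    obtain ⟨y, hy, rfl⟩ := L.ham.surj b
    rcases lt_trichotomy x y with h | h | h
    · obtain ⟨i, hi1, e1, e2⟩ := key x y h hy hz
      exact ⟨i, hi1, by unfold ed; rw [e1, e2]⟩
    · subst h
      exact absurd hz (G.loopless.irrefl _)
    · obtain ⟨i, hi1, e1, e2⟩ := key y x h hx hz.symm
      exact ⟨i, hi1, by unfold ed; rw [e1, e2, Sym2.eq_swap]⟩

open Classical in
theorem ncard_ed (P : Sym2 V → Prop) :
    {z | z ∈ G.edgeSet ∧ P z}.ncard = ∑ i ∈ range (v + c), bi (P (ed v f A B i)) := by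
  have e : {z | z ∈ G.edgeSet ∧ P z} = ((((range (v + c)).filter (fun i => P (ed v f A B i))).image (ed v f A B) : Finset (Sym2 V)) : Set (Sym2 V)) := by
    ext z
    simp only [Set.mem_setOf_eq, coe_image, coe_filter, mem_range, Set.mem_image]
    constructor
    · rintro ⟨h1, h2⟩
      obtain ⟨i, hi1, rfl⟩ := ed_surj L z h1
      exact ⟨i, ⟨hi1, h2⟩, rfl⟩
    · rintro ⟨i, ⟨h1, h2⟩, rfl⟩
      exact ⟨ed_mem L i h1, h2⟩
  rw [e, Set.ncard_coe_finset, card_image_of_injOn, card_filter]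
  · rfl
  intro i hi1 i' hi2 he
  simp only [coe_filter, mem_range, Set.mem_setOf_eq] at hi1 hi2
  exact ed_inj L i i' hi1.1 hi2.1 he

theorem edges_eq : G.edgeSet.ncard = v + c := by
  have := ncard_ed L (fun _ => True)
  simpa [bi] using this

/-- indicator of a graph -/
noncomputable def ind (_L : Lab G v f c A B) (F : SimpleGraph V) (i : ℕ) : ℕ := bi (ed v f A B i ∈ F.edgeSet)

theorem ind_card (F : SimpleGraph V) (hF : F ≤ G) : F.edgeSet.ncard = ∑ i ∈ range (v + c), ind L F i := by
  have := ncard_ed L (fun z => z ∈ F.edgeSet)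
  unfold ind
  rw [← this]
  congr 1
  ext z
  simp only [Set.mem_setOf_eq]
  exact ⟨fun h => ⟨edgeSet_mono hF h, h⟩, fun h => h.2⟩

theorem deg_eq (F : SimpleGraph V) (hF : F ≤ G) (x : ℕ) (hx : x < v) :
    (F.neighborSet (f x)).ncard = ind L F x + ind L F (prv v x) + csum c A B (fun j => ind L F (v + j)) x := by
  classical
  have hv := L.v3
  rw [inc_card]
  have h := ncard_ed L (fun z => z ∈ F.edgeSet ∧ f x ∈ z)
  have e : {z | z ∈ F.edgeSet ∧ f x ∈ z} = {z | z ∈ G.edgeSet ∧ z ∈ F.edgeSet ∧ f x ∈ z} := by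
    ext z
    simp only [Set.mem_setOf_eq]
    exact ⟨fun h => ⟨edgeSet_mono hF h.1, h⟩, fun h => h.2⟩
  rw [e, h]
  have e2 : ∀ i ∈ range (v + c), bi (ed v f A B i ∈ F.edgeSet ∧ f x ∈ ed v f A B i) =
      if lo v A i = x ∨ hi v B i = x then ind L F i else 0 := by
    intro i hi1
    rw [mem_ed L i x (mem_range.1 hi1) hx]
    unfold ind bi
    split_ifs <;> tauto
  rw [sum_congr rfl e2, sum_range_add]
  congr 1
  · have hp : prv v x < v := by unfold prv; split_ifs <;> omega
    have hne : x ≠ prv v x := by unfold prv; split_ifs <;> omega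
    rw [← sum_pair hne]
    have hsub : ({x, prv v x} : Finset ℕ) ⊆ range v := by
      intro y hy
      simp only [mem_insert, mem_singleton] at hy
      rw [mem_range]; rcases hy with rfl | rfl <;> assumption
    rw [← sum_subset hsub]
    · apply sum_congr rfl
      intro y hy
      simp only [mem_insert, mem_singleton] at hy
      rw [if_pos]
      unfold lo hi
      unfold prv at hy
      split_ifs at hy ⊢ <;> omega
    · intro y hy hn
      simp only [mem_insert, mem_singleton] at hn
      rw [mem_range] at hy
      rw [if_neg]
      unfold lo hi
      unfold prv at hn
      split_ifs at hn ⊢ <;> omega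
  · unfold csum
    apply sum_congr rfl
    intro j hj
    have hj := mem_range.1 hj
    have h1 := L.lt j hj
    have e1 : lo v A (v + j) = A j := by unfold lo; rw [if_neg (by omega), Nat.add_sub_cancel_left]
    have e3 : hi v B (v + j) = B j := by unfold hi; rw [if_neg (by omega), Nat.add_sub_cancel_left]
    rw [e1, e3]
    beta_reduce
    split_ifs <;> omega

theorem Ev_iff (F : SimpleGraph V) (hF : F ≤ G) : Ev F ↔ EvX v c A B (ind L F) := by
  constructor
  · intro h x hx
    have := h (f x)
    rw [deg_eq L F hF x hx, Nat.even_iff] at this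
    exact this
  · intro h w
    obtain ⟨x, hx, rfl⟩ := L.ham.surj w
    rw [deg_eq L F hF x hx, Nat.even_iff]
    exact h x hx

theorem le_iff_ind (F F' : SimpleGraph V) (hF : F ≤ G) : F ≤ F' ↔ ∀ i < v + c, ind L F i ≤ ind L F' i := by
  rw [← edgeSet_subset_edgeSet]
  constructor
  · intro h i hi1
    unfold ind
    by_cases h1 : ed v f A B i ∈ F.edgeSet
    · rw [bi_pos h1, bi_pos (h h1)]
    · rw [bi_neg h1]; exact Nat.zero_le _
  · intro h z hz
    obtain ⟨i, hi1, rfl⟩ := ed_surj L z (edgeSet_mono hF hz)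
    have := h i hi1
    unfold ind at this
    rw [bi_pos hz] at this
    by_contra hc
    rw [bi_neg hc] at this
    omega

/-- the graph of candidate q -/
def gr (_L : Lab G v f c A B) (q : ℕ) : SimpleGraph V :=
  fromEdgeSet {z | ∃ i < v + c, ed v f A B i = z ∧ chi c v A B q i = 1}

theorem gr_edge (q : ℕ) : (gr L q).edgeSet = {z | ∃ i < v + c, ed v f A B i = z ∧ chi c v A B q i = 1} := by
  unfold gr
  rw [edgeSet_fromEdgeSet]
  rw [sdiff_eq_left, Set.disjoint_left]
  rintro z ⟨i, hi1, rfl, -⟩ hz1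
  exact absurd hz1 (G.not_isDiag_of_mem_edgeSet (ed_mem L i hi1))

theorem gr_le (q : ℕ) : gr L q ≤ G := by
  rw [← edgeSet_subset_edgeSet, gr_edge]
  rintro z ⟨i, hi1, rfl, -⟩
  exact ed_mem L i hi1

theorem ind_gr (q i : ℕ) (hi1 : i < v + c) : ind L (gr L q) i = chi c v A B q i := by
  unfold ind
  rw [gr_edge]
  have h := chi_le c v A B q i
  by_cases h1 : ed v f A B i ∈ {z | ∃ i < v + c, ed v f A B i = z ∧ chi c v A B q i = 1}
  · rw [bi_pos h1]
    obtain ⟨i', hi', he, hc⟩ := h1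
    rw [← ed_inj L i' i hi' hi1 he, hc]
  · rw [bi_neg h1]
    by_contra h2
    exact h1 ⟨i, hi1, rfl, by omega⟩

theorem gr_Ev (q : ℕ) : Ev (gr L q) := by
  have hv := L.v3
  rw [Ev_iff L _ (gr_le L q)]
  exact EvX_congr (fun i hi1 => (ind_gr L q i hi1).symm) (EvX_chi c v A B (by omega) L.lt L.bd q)

theorem gr_surj (F : SimpleGraph V) (hF : F ≤ G) (he : Ev F) : ∃ q < 2 ^ (c + 1), gr L q = F := by
  have hv := L.v3
  obtain ⟨q, hq, h⟩ := chi_of_EvX c v A B (ind L F) (by omega) L.lt L.bd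
    (fun i _ => by unfold ind; exact bi_le _) ((Ev_iff L F hF).1 he)
  refine ⟨q, hq, le_antisymm ?_ ?_⟩
  · rw [le_iff_ind L _ _ (gr_le L q)]
    intro i hi1
    rw [ind_gr L q i hi1, h i hi1]
  · rw [le_iff_ind L _ _ hF]
    intro i hi1
    rw [ind_gr L q i hi1, h i hi1]

theorem gr_le_iff (q q' : ℕ) : gr L q ≤ gr L q' ↔
    (∀ l < c + 1, bitf l q ≤ bitf l q') ∧ (∀ x < v, hst c A B q x ≤ hst c A B q' x) := by
  have hv := L.v3
  rw [le_iff_ind L _ _ (gr_le L q)]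
  have hx : ∀ q x, x < v → ind L (gr L q) x = hst c A B q x := by
    intro q x hx
    rw [ind_gr L q x (by omega)]
    unfold chi; rw [if_pos hx]
  have hj : ∀ q j, j < c → ind L (gr L q) (v + j) = bitf (j + 1) q := by
    intro q j hj
    rw [ind_gr L q _ (by omega)]
    unfold chi; rw [if_neg (by omega), Nat.add_sub_cancel_left]
  constructor
  · intro h
    have h2 : ∀ x < v, hst c A B q x ≤ hst c A B q' x := by
      intro x hxv
      rw [← hx q x hxv, ← hx q' x hxv]; exact h x (by omega)
    refine ⟨?_, h2⟩
    intro l hl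
    cases l with
    | zero =>
      rw [← hst_last c v A B (by omega) L.bd q, ← hst_last c v A B (by omega) L.bd q']
      exact h2 _ (by omega)
    | succ j =>
      rw [← hj q j (by omega), ← hj q' j (by omega)]; exact h _ (by omega)
  · rintro ⟨h1, h2⟩ i hi1
    by_cases hc : i < v
    · rw [hx q i hc, hx q' i hc]; exact h2 i hc
    · obtain ⟨j, rfl⟩ : ∃ j, i = v + j := ⟨i - v, by omega⟩
      rw [hj q j (by omega), hj q' j (by omega)]; exact h1 _ (by omega)

theorem gr_inj (q q' : ℕ) (hq : q < 2 ^ (c + 1)) (hq' : q' < 2 ^ (c + 1)) (h : gr L q = gr L q') : q = q' := by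
  have h1 := (gr_le_iff L q q').1 h.le
  have h2 := (gr_le_iff L q' q).1 h.ge
  exact bits_inj (c + 1) q q' hq hq' (fun l hl => le_antisymm (h1.1 l hl) (h2.1 l hl))

theorem gr_zero : gr L 0 = ⊥ := by
  apply le_bot_iff.1
  rw [le_iff_ind L _ _ (gr_le L 0)]
  intro i hi1
  rw [ind_gr L 0 i hi1]
  have : chi c v A B 0 i = 0 := by
    unfold chi
    rw [hst_def]
    unfold spsum
    simp [bitf_zero]
  rw [this]
  exact Nat.zero_le _

theorem gr_card (q : ℕ) : (gr L q).edgeSet.ncard = clen c v A B q := by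
  rw [ind_card L _ (gr_le L q), sum_congr rfl (fun i hi1 => ind_gr L q i (mem_range.1 hi1)), sum_range_add, add_comm]
  unfold clen
  congr 1
  · apply sum_congr rfl
    intro j _
    unfold chi; rw [if_neg (by omega), Nat.add_sub_cancel_left]
  · apply sum_congr rfl
    intro x hx
    unfold chi; rw [if_pos (mem_range.1 hx)]

theorem valid_iff (q : ℕ) (hq : q < 2 ^ (c + 1)) : Valid c v A B q ↔ MinEv (gr L q) := by
  have hpos : 0 < 2 ^ (c + 1) := by positivity
  constructor
  · rintro ⟨h0, h⟩
    refine ⟨fun hb => h0 (gr_inj L q 0 hq hpos (by rw [hb, gr_zero])), gr_Ev L q, ?_⟩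
    intro F' hle hev
    obtain ⟨q', hq', rfl⟩ := gr_surj L F' (hle.trans (gr_le L q)) hev
    have h1 := (gr_le_iff L q' q).1 hle
    rcases h q' hq' h1.1 h1.2 with rfl | rfl
    · exact Or.inl (gr_zero L)
    · exact Or.inr rfl
  · rintro ⟨h0, -, h⟩
    refine ⟨?_, ?_⟩
    · rintro rfl
      exact h0 (gr_zero L)
    · intro q' hq' h1 h2
      rcases h (gr L q') ((gr_le_iff L q' q).2 ⟨h1, h2⟩) (gr_Ev L q') with h3 | h3
      · exact Or.inl (gr_inj L q' 0 hq' hpos (by rw [h3, gr_zero]))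
      · exact Or.inr (gr_inj L q' q hq' hq h3)

theorem count_eq (k : ℕ) (hk : 3 ≤ k) : {q | q < 2 ^ (c + 1) ∧ Valid c v A B q ∧ clen c v A B q = k}.ncard = cycleCount G k := by
  rw [cycleCount_eq G k hk]
  refine Set.ncard_congr (fun q _ => gr L q) ?_ ?_ ?_
  · rintro q ⟨hq, h1, h2⟩
    exact ⟨gr_le L q, (valid_iff L q hq).1 h1, by rw [gr_card L q, h2]⟩
  · rintro q q' ⟨hq, -⟩ ⟨hq', -⟩ h
    exact gr_inj L q q' hq hq' h
  · rintro F ⟨h1, h2, h3⟩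
    obtain ⟨q, hq, rfl⟩ := gr_surj L F h1 h2.2.1
    exact ⟨q, ⟨hq, (valid_iff L q hq).2 h2, by rw [← gr_card L q, h3]⟩, rfl⟩

end

theorem final (G : SimpleGraph V) (r : ℕ) (hr : 3 ≤ r) (he : G.edgeSet.ncard ≤ Fintype.card V + 5)
    (h : IsRPancyclic G r) : False := by
  obtain ⟨hv, hc⟩ := h
  have hH := exists_ham G hv (by rw [hc _ hv le_rfl]; omega)
  obtain ⟨f, hf, hgap⟩ := exists_good G _ (by omega) hH
  obtain ⟨c, A, B, L⟩ := exists_lab G _ hv f hf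
  have hcc := edges_eq L
  have hcnt : ∀ k, 3 ≤ k → k ≤ Fintype.card V →
      {q | q < 2 ^ (c + 1) ∧ Valid c (Fintype.card V) A B q ∧ clen c (Fintype.card V) A B q = k}.ncard = r := by
    intro k h3 hk
    rw [count_eq L k h3, hc k h3 hk]
  by_cases hc0 : c = 0
  · subst hc0
    have h1 := hcnt 3 le_rfl hv
    have h2 : {q | q < 2 ^ (0 + 1) ∧ Valid 0 (Fintype.card V) A B q ∧ clen 0 (Fintype.card V) A B q = 3}.ncard ≤ ({1} : Set ℕ).ncard := by
      apply Set.ncard_le_ncard _ (Set.toFinite _)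
      rintro q ⟨hq, hval, -⟩
      have := hval.1
      simp at hq ⊢
      omega
    rw [Set.ncard_singleton] at h2
    omega
  have hb : ∀ x, (∃ j < c, x = A j ∨ x = B j) → x < Fintype.card V := by
    rintro x ⟨j, hj, h⟩
    have := L.lt j hj
    have := L.bd j hj
    omega
  refine core c (by omega) (by omega) (hok_all c (by omega) (by omega)) (Fintype.card V) hv A B L.lt L.bd L.anti L.tie
    ?_ r hr hcnt ?_
  · intro p p' hp hp' hpp hno x hx
    refine hgap p p' (hb _ hp') ((L.endV p (hb _ hp)).2 hp) ((L.endV p' (hb _ hp')).2 hp') hpp ?_ x (hb _ hx)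
      ((L.endV x (hb _ hx)).2 hx)
    intro y hy hye
    exact hno y ((L.endV y hy).1 hye)
  · intro q hq hval
    have := minEv_bounds G (gr L q) (gr_le L q) ((valid_iff L q hq).1 hval)
    rw [gr_card L q] at this
    exact this

end RPan

theorem no_r_pancyclic_with_few_edges {V : Type*} [Fintype V] (G : SimpleGraph V)
    (r : ℕ) (hr : 3 ≤ r) (he : G.edgeSet.ncard ≤ Fintype.card V + 5) :
    ¬ IsRPancyclic G r := by
  intro h
  exact RPan.final G r hr he h
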